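/- arXiv:1510.03052 — 2 statements merged into one kernel-verified Lean document; each statement's English description precedes it below -/
import Mathlib

section
/- There are, up to isomorphism, exactly two (2)-pancyclic graphs on 8 vertices with at most 13 edges. -/
open SimpleGraph

/-- The number of cycles of length `k` in `G`, counted as subgraphs of `G`
isomorphic to the cycle graph `C_k`. -/
noncomputable def cycleCount {V : Type*} (G : SimpleGraph V) (k : ℕ) : ℕ :=
  {H : G.Subgraph | Nonempty (H.coe ≃g cycleGraph k)}.ncard

/-- A graph on `v ≥ 3` vertices is `(r)`-pancyclic if it contains precisely `r`
cycles of every length from `3` to `v`. -/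
def IsRPancyclic {V : Type*} [Fintype V] (G : SimpleGraph V) (r : ℕ) : Prop :=
  3 ≤ Fintype.card V ∧
    ∀ k : ℕ, 3 ≤ k → k ≤ Fintype.card V → cycleCount G k = r

/-- There are, up to isomorphism, exactly `N` graphs on `v` vertices with at most
`b` edges satisfying the given pancyclicity property with parameter `r`. -/
def ExactlyNUpToIso (r N v b : ℕ) : Prop :=
  ∃ Gs : Fin N → SimpleGraph (Fin v),
    (∀ i j : Fin N, i ≠ j → IsEmpty (Gs i ≃g Gs j)) ∧
    (∀ i : Fin N, IsRPancyclic (Gs i) r ∧ (Gs i).edgeSet.ncard ≤ b) ∧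
    (∀ (W : Type) [Fintype W] (G : SimpleGraph W), Fintype.card W = v →
      G.edgeSet.ncard ≤ b → IsRPancyclic G r → ∃ i : Fin N, Nonempty (G ≃g Gs i))

/-! ### Cycle subgraphs as cyclic vertex sequences -/

section Cyc

variable {V : Type*} {G : SimpleGraph V}

/-- The subgraph traced by a cyclic sequence of pairwise adjacent vertices. -/
def cycSub {n : ℕ} (F : Fin (n+3) → V) (h : ∀ i, G.Adj (F i) (F (i+1))) : G.Subgraph where
  verts := Set.range F
  Adj a b := ∃ i, (a = F i ∧ b = F (i+1)) ∨ (b = F i ∧ a = F (i+1))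
  adj_sub := by
    rintro a b ⟨i, ⟨rfl, rfl⟩ | ⟨rfl, rfl⟩⟩
    · exact h i
    · exact (h i).symm
  edge_vert := by
    rintro a b ⟨i, ⟨rfl, rfl⟩ | ⟨rfl, rfl⟩⟩ <;> exact ⟨_, rfl⟩
  symm := ⟨by
    rintro a b ⟨i, h⟩
    exact ⟨i, h.symm⟩⟩

lemma cycGraph_adj {n : ℕ} (i j : Fin (n+3)) :
    (cycleGraph (n+3)).Adj i j ↔ j = i + 1 ∨ i = j + 1 := by
  rw [cycleGraph_adj]
  rw [sub_eq_iff_eq_add', sub_eq_iff_eq_add', or_comm]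

lemma cycle_iff {n : ℕ} (H : G.Subgraph) :
    Nonempty (H.coe ≃g cycleGraph (n+3)) ↔
      ∃ (F : Fin (n+3) → V) (h : ∀ i, G.Adj (F i) (F (i+1))),
        Function.Injective F ∧ H = cycSub F h := by
  constructor
  · rintro ⟨e⟩
    have hadj : ∀ i j, H.Adj (e.symm i : V) (e.symm j : V) ↔ (j = i + 1 ∨ i = j + 1) := by
      intro i j
      rw [← cycGraph_adj, ← e.symm.map_rel_iff]
      rfl
    refine ⟨fun i => (e.symm i : V), fun i => H.adj_sub ((hadj _ _).2 (Or.inl rfl)), ?_, ?_⟩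
    · intro i j hij
      exact e.symm.injective (Subtype.ext hij)
    · have hs : ∀ a (ha : a ∈ H.verts), a = (e.symm (e ⟨a, ha⟩) : V) := by
        intro a ha
        simp
      refine SimpleGraph.Subgraph.ext ?_ ?_
      · ext a
        constructor
        · intro ha
          exact ⟨e ⟨a, ha⟩, (hs a ha).symm⟩
        · rintro ⟨i, rfl⟩
          exact (e.symm i).2
      · funext a b
        apply propext
        constructor
        · intro hab
          have ha := H.edge_vert hab
          have hb := H.edge_vert hab.symm
          have h2 := hab
          rw [hs a ha, hs b hb, hadj] at h2
          rcases h2 with h2 | h2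
          · refine ⟨e ⟨a, ha⟩, Or.inl ⟨hs a ha, ?_⟩⟩
            rw [← h2]; exact hs b hb
          · refine ⟨e ⟨b, hb⟩, Or.inr ⟨hs b hb, ?_⟩⟩
            rw [← h2]; exact hs a ha
        · rintro ⟨i, ⟨rfl, rfl⟩ | ⟨rfl, rfl⟩⟩
          · exact (hadj _ _).2 (Or.inl rfl)
          · exact (hadj _ _).2 (Or.inr rfl)
  · rintro ⟨F, h, hF, rfl⟩
    refine ⟨RelIso.symm ⟨Equiv.ofInjective F hF, ?_⟩⟩
    intro i j
    rw [cycGraph_adj]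
    change (∃ k, (F i = F k ∧ F j = F (k+1)) ∨ (F j = F k ∧ F i = F (k+1))) ↔ _
    constructor
    · rintro ⟨k, ⟨h1, h2⟩ | ⟨h1, h2⟩⟩
      · have := hF h1; have := hF h2; subst_vars; exact Or.inl rfl
      · have := hF h1; have := hF h2; subst_vars; exact Or.inr rfl
    · rintro (rfl | rfl)
      · exact ⟨i, Or.inl ⟨rfl, rfl⟩⟩
      · exact ⟨j, Or.inr ⟨rfl, rfl⟩⟩

lemma cycle_map {W : Type*} {G' : SimpleGraph W} (e : G ≃g G') {n : ℕ} (H : G.Subgraph)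
    (hH : Nonempty (H.coe ≃g cycleGraph (n+3))) :
    Nonempty ((H.map e.toHom).coe ≃g cycleGraph (n+3)) := by
  obtain ⟨F, h, hF, rfl⟩ := (cycle_iff H).1 hH
  refine (cycle_iff _).2 ⟨fun i => e (F i), fun i => e.map_adj_iff.2 (h i),
    e.injective.comp hF, ?_⟩
  refine SimpleGraph.Subgraph.ext ?_ ?_
  · ext a
    simp [cycSub, Subgraph.map]
  · funext a b
    apply propext
    constructor
    · rintro ⟨x, y, ⟨i, ⟨rfl, rfl⟩ | ⟨rfl, rfl⟩⟩, rfl, rfl⟩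
      · exact ⟨i, Or.inl ⟨rfl, rfl⟩⟩
      · exact ⟨i, Or.inr ⟨rfl, rfl⟩⟩
    · rintro ⟨i, ⟨rfl, rfl⟩ | ⟨rfl, rfl⟩⟩
      · exact ⟨_, _, ⟨i, Or.inl ⟨rfl, rfl⟩⟩, rfl, rfl⟩
      · exact ⟨_, _, ⟨i, Or.inr ⟨rfl, rfl⟩⟩, rfl, rfl⟩

lemma cycleCount_iso {W : Type*} {G' : SimpleGraph W} (e : G ≃g G') (n : ℕ) :
    cycleCount G (n+3) = cycleCount G' (n+3) := by
  have inv : ∀ H : G.Subgraph, (H.map e.toHom).map e.symm.toHom = H := by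
    intro H
    rw [← Subgraph.map_comp]
    have : e.symm.toHom.comp e.toHom = Hom.id := by
      ext x; exact e.symm_apply_apply x
    rw [this, Subgraph.map_id]
  have inv' : ∀ H : G'.Subgraph, (H.map e.symm.toHom).map e.toHom = H := by
    intro H
    rw [← Subgraph.map_comp]
    have : e.toHom.comp e.symm.toHom = Hom.id := by
      ext x; exact e.apply_symm_apply x
    rw [this, Subgraph.map_id]
  unfold cycleCount
  refine Set.ncard_congr (fun H _ => H.map e.toHom) (fun H hH => ?_) ?_ ?_
  · exact cycle_map e H hH
  · intro H H' _ _ hh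
    rw [← inv H, ← inv H', hh]
  · intro H hH
    refine ⟨H.map e.symm.toHom, ?_, inv' H⟩
    exact cycle_map e.symm H hH

end Cyc

/-! ### Bit-mask graphs on eight vertices and an enumeration of their cycles -/

/-- The `i`-th bit of `t`. -/
def tb (t i : ℕ) : Bool := Nat.beq (Nat.land (Nat.shiftRight t i) 1) 1

/-- The mask of the edge `ab`; bit `8 * a + b` stands for the pair `(a, b)`. -/
def bt (a b : ℕ) : ℕ :=
  Nat.lor (Nat.shiftLeft 1 (Nat.add (Nat.mul 8 a) b)) (Nat.shiftLeft 1 (Nat.add (Nat.mul 8 b) a))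

/-- Prepend to `acc` the masks of all cycles that start at `s`, have come to `v` along the edges
of `edm`, and use `n` more vertices, all from the set `av`. -/
def walk (t s : ℕ) : ℕ → ℕ → ℕ → ℕ → List ℕ → List ℕ
  | 0, v, _, edm, acc => cond (tb t (Nat.add (Nat.mul 8 v) s)) (Nat.lor edm (bt v s) :: acc) acc
  | n+1, v, av, edm, acc =>
    cond (Nat.beq (Nat.land (Nat.shiftRight t (Nat.mul 8 v)) av) 0) acc (
    List.foldr (fun w acc => cond (tb (Nat.land (Nat.shiftRight t (Nat.mul 8 v)) av) w)
      (walk t s n w (Nat.xor av (Nat.shiftLeft 1 w)) (Nat.lor edm (bt v w)) acc) acc)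
      acc [0,1,2,3,4,5,6,7])

/-- Masks of all cycles with `k` vertices. -/
def walks (t k : ℕ) : List ℕ :=
  List.foldr (fun s acc => walk t s (Nat.pred k) s (Nat.sub 256 (Nat.shiftLeft 2 s)) 0 acc) []
    [0,1,2,3,4,5,6,7]

lemma tb_eq (t i : ℕ) : tb t i = t.testBit i := by
  rw [Nat.testBit_eq_decide_div_mod_eq, Bool.eq_iff_iff]
  unfold tb
  rw [Nat.beq_eq, decide_eq_true_iff]
  change (t >>> i) &&& 1 = 1 ↔ _
  rw [Nat.and_one_is_mod, Nat.shiftRight_eq_div_pow]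

lemma lor_eq (a b : ℕ) : Nat.lor a b = a ||| b := rfl

lemma testBit_shl (i j : ℕ) : (Nat.shiftLeft 1 i).testBit j = decide (i = j) := by
  change (1 <<< i).testBit j = _
  rw [Nat.one_shiftLeft, Nat.testBit_two_pow]

lemma testBit_bt (a b e : ℕ) :
    (bt a b).testBit e = true ↔ e = 8 * a + b ∨ e = 8 * b + a := by
  unfold bt
  rw [lor_eq, Nat.testBit_or, testBit_shl, testBit_shl]
  simp only [Bool.or_eq_true, decide_eq_true_eq]
  change 8 * a + b = e ∨ 8 * b + a = e ↔ _
  simp only [eq_comm]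

lemma exists_bits (p : ℕ → Prop) (n : ℕ) :
    ∃ t : ℕ, ∀ i, t.testBit i = true ↔ i < n ∧ p i := by
  induction n with
  | zero => exact ⟨0, by simp⟩
  | succ n ih =>
    obtain ⟨t, ht⟩ := ih
    by_cases hp : p n
    · refine ⟨t ||| 2 ^ n, fun i => ?_⟩
      rw [Nat.testBit_or, Bool.or_eq_true, ht, Nat.testBit_two_pow, decide_eq_true_iff]
      constructor
      · rintro (h | rfl)
        · exact ⟨by omega, h.2⟩
        · exact ⟨by omega, hp⟩
      · rintro ⟨h1, h2⟩
        by_cases hi : n = i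
        · exact Or.inr hi
        · exact Or.inl ⟨by omega, h2⟩
    · refine ⟨t, fun i => ?_⟩
      rw [ht]
      constructor
      · rintro h
        exact ⟨by omega, h.2⟩
      · rintro ⟨h1, h2⟩
        refine ⟨?_, h2⟩
        by_contra hi
        have : i = n := by omega
        exact hp (this ▸ h2)

/-- Mask of the edges of the first `j` steps of a vertex sequence. -/
def edm (f : ℕ → ℕ) : ℕ → ℕ
  | 0 => 0
  | j+1 => edm f j ||| bt (f j) (f (j+1))

lemma testBit_edm (f : ℕ → ℕ) (j e : ℕ) :
    (edm f j).testBit e = true ↔ ∃ i < j, (bt (f i) (f (i+1))).testBit e = true := by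
  induction j with
  | zero => simp [edm]
  | succ j ih =>
    rw [edm, Nat.testBit_or, Bool.or_eq_true, ih]
    constructor
    · rintro (⟨i, hi, h⟩ | h)
      · exact ⟨i, by omega, h⟩
      · exact ⟨j, by omega, h⟩
    · rintro ⟨i, hi, h⟩
      by_cases hij : i = j
      · subst hij; exact Or.inr h
      · exact Or.inl ⟨i, by omega, h⟩

lemma edm_congr {f g : ℕ → ℕ} {j : ℕ} (h : ∀ i ≤ j, f i = g i) : edm f j = edm g j := by
  induction j with
  | zero => rfl
  | succ j ih =>
    rw [edm, edm, ih (fun i hi => h i (by omega)), h j (by omega), h (j+1) le_rfl]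

lemma mem_foldr_cond {α : Type*} (m : α) (p : ℕ → Bool) (W : ℕ → List α → List α) (Q : ℕ → Prop)
    (l : List ℕ) (acc : List α)
    (h : ∀ w ∈ l, p w = true → ∀ acc, m ∈ W w acc ↔ m ∈ acc ∨ Q w) :
    m ∈ List.foldr (fun w acc => cond (p w) (W w acc) acc) acc l ↔
      m ∈ acc ∨ ∃ w ∈ l, p w = true ∧ Q w := by
  induction l with
  | nil => simp
  | cons a l ih =>
    have ih' := ih (fun w hw => h w (List.mem_cons_of_mem _ hw))
    rw [List.foldr_cons]
    cases hp : p a with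
    | false =>
      simp only [cond_false]
      rw [ih']
      simp [hp]
    | true =>
      simp only [cond_true]
      rw [h a List.mem_cons_self hp, ih']
      simp only [List.mem_cons, exists_eq_or_imp, hp, true_and]
      rw [or_assoc, or_comm (b := Q a)]

/-- One step of a cycle sequence with least vertex `s`. -/
def Step (t s : ℕ) (f : ℕ → ℕ) (i : ℕ) : Prop :=
  f i < 8 ∧ s < f i ∧ (∀ i' < i, f i' ≠ f i) ∧ t.testBit (8 * f (i-1) + f i) = true

lemma mem_range8 (w : ℕ) : w ∈ [0,1,2,3,4,5,6,7] ↔ w < 8 := by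
  simp only [List.mem_cons, List.not_mem_nil, or_false]
  omega

lemma mem_walk (t m : ℕ) : ∀ (n : ℕ) (f : ℕ → ℕ) (j av : ℕ) (acc : List ℕ),
    (∀ w < 8, av.testBit w = true ↔ f 0 < w ∧ ∀ i ≤ j, f i ≠ w) →
    (m ∈ walk t (f 0) n (f j) av (edm f j) acc ↔ m ∈ acc ∨
      ∃ f' : ℕ → ℕ, (∀ i ≤ j, f' i = f i) ∧ (∀ i, j < i → i ≤ j + n → Step t (f 0) f' i) ∧
        t.testBit (8 * f' (j+n) + f 0) = true ∧ m = edm f' (j+n) ||| bt (f' (j+n)) (f 0)) := by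
  intro n
  induction n with
  | zero =>
    intro f j av acc hav
    have e1 : tb t (Nat.add (Nat.mul 8 (f j)) (f 0)) = t.testBit (8 * f j + f 0) := tb_eq _ _
    rw [walk, e1, lor_eq]
    constructor
    · intro h
      cases hb : t.testBit (8 * f j + f 0) with
      | false => rw [hb] at h; exact Or.inl h
      | true =>
        rw [hb] at h
        rcases List.mem_cons.1 h with h | h
        · exact Or.inr ⟨f, fun _ _ => rfl, fun i h1 h2 => by omega, hb, h⟩
        · exact Or.inl h
    · rintro (h | ⟨f', h1, -, h3, h4⟩)
      · cases t.testBit (8 * f j + f 0) with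
        | false => exact h
        | true => exact List.mem_cons_of_mem _ h
      · rw [add_zero, h1 j le_rfl] at h3 h4
        rw [h3, h4, edm_congr h1]
        exact List.mem_cons_self
  | succ n ih =>
    intro f j av acc hav
    have e2 : ∀ w < 8, tb (Nat.land (Nat.shiftRight t (Nat.mul 8 (f j))) av) w = true ↔
        (t.testBit (8 * f j + w) = true ∧ f 0 < w ∧ ∀ i ≤ j, f i ≠ w) := by
      intro w hw
      rw [tb_eq]
      change ((t >>> (8 * f j)) &&& av).testBit w = true ↔ _
      rw [Nat.testBit_and, Bool.and_eq_true, hav w hw, Nat.testBit_shiftRight]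
    have main : m ∈ List.foldr (fun w acc =>
          cond (tb (Nat.land (Nat.shiftRight t (Nat.mul 8 (f j))) av) w)
          (walk t (f 0) n w (Nat.xor av (Nat.shiftLeft 1 w)) (Nat.lor (edm f j) (bt (f j) w)) acc)
          acc) acc [0,1,2,3,4,5,6,7] ↔ m ∈ acc ∨
      ∃ f' : ℕ → ℕ, (∀ i ≤ j, f' i = f i) ∧ (∀ i, j < i → i ≤ j + (n+1) → Step t (f 0) f' i) ∧
        t.testBit (8 * f' (j+(n+1)) + f 0) = true ∧
          m = edm f' (j+(n+1)) ||| bt (f' (j+(n+1))) (f 0) := by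
      rw [mem_foldr_cond m _ _ (fun w => ∃ f' : ℕ → ℕ, (∀ i ≤ j, f' i = f i) ∧ f' (j+1) = w ∧
        (∀ i, j + 1 < i → i ≤ j + 1 + n → Step t (f 0) f' i) ∧
        t.testBit (8 * f' (j+1+n) + f 0) = true ∧
          m = edm f' (j+1+n) ||| bt (f' (j+1+n)) (f 0))]
      · apply or_congr Iff.rfl
        constructor
        · rintro ⟨w, hw, hp, f', h1, rfl, h3, h4, h5⟩
          rw [mem_range8] at hw
          obtain ⟨q1, q2, q3⟩ := (e2 _ hw).1 hp
          refine ⟨f', h1, ?_, ?_, ?_⟩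
          · intro i hi1 hi2
            by_cases hij : i = j + 1
            · subst hij
              refine ⟨hw, q2, ?_, ?_⟩
              · intro i' hi'
                rw [h1 i' (by omega)]
                exact q3 i' (by omega)
              · rw [Nat.add_sub_cancel, h1 j le_rfl]; exact q1
            · exact h3 i (by omega) (by omega)
          · rwa [show j + (n+1) = j + 1 + n by ring]
          · rwa [show j + (n+1) = j + 1 + n by ring]
        · rintro ⟨f', h1, h3, h4, h5⟩
          obtain ⟨s1, s2, s3, s4⟩ := h3 (j+1) (by omega) (by omega)
          rw [show j + (n+1) = j + 1 + n by ring] at h4 h5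
          refine ⟨f' (j+1), (mem_range8 _).2 s1, (e2 _ s1).2 ⟨?_, s2, ?_⟩, f', h1, rfl,
            fun i hi1 hi2 => h3 i (by omega) (by omega), h4, h5⟩
          · rw [Nat.add_sub_cancel, h1 j le_rfl] at s4; exact s4
          · intro i hi
            rw [← h1 i hi]
            exact s3 i (by omega)
      · intro w hw hp acc
        rw [mem_range8] at hw
        obtain ⟨q1, q2, q3⟩ := (e2 _ hw).1 hp
        set g : ℕ → ℕ := Function.update f (j+1) w with hg
        have g1 : ∀ i ≤ j, g i = f i := by
          intro i hi
          rw [hg, Function.update_of_ne (by omega)]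
        have g2 : g (j+1) = w := by rw [hg, Function.update_self]
        have g0 : g 0 = f 0 := g1 0 (by omega)
        have eg : Nat.lor (edm f j) (bt (f j) w) = edm g (j+1) := by
          rw [edm, g2, g1 j le_rfl, edm_congr g1]; rfl
        have := ih g (j+1) (Nat.xor av (Nat.shiftLeft 1 w)) acc (by
          intro w' hw'
          change (av ^^^ (Nat.shiftLeft 1 w)).testBit w' = true ↔ _
          rw [Nat.testBit_xor, testBit_shl, g0]
          by_cases hww : w = w'
          · subst hww
            have : av.testBit w = true := (hav w hw).2 ⟨q2, q3⟩
            simp only [this, decide_true, bne_self_eq_false, Bool.false_eq_true, false_iff]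
            rintro ⟨-, h⟩
            exact h (j+1) le_rfl g2
          · simp only [hww, decide_false, Bool.bne_false]
            rw [hav w' hw']
            constructor
            · rintro ⟨r1, r2⟩
              refine ⟨r1, fun i hi => ?_⟩
              by_cases hij : i = j + 1
              · subst hij; rw [g2]; exact hww
              · rw [g1 i (by omega)]; exact r2 i (by omega)
            · rintro ⟨r1, r2⟩
              refine ⟨r1, fun i hi => ?_⟩
              rw [← g1 i hi]; exact r2 i (by omega))
        rw [g0, g2] at this
        rw [eg, this]
        apply or_congr Iff.rfl
        apply exists_congr
        intro f'
        constructor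
        · rintro ⟨h1, h2⟩
          exact ⟨fun i hi => (h1 i (by omega)).trans (g1 i hi), (h1 (j+1) le_rfl).trans g2, h2⟩
        · rintro ⟨h1, h2, h3⟩
          refine ⟨fun i hi => ?_, h3⟩
          by_cases hij : i = j + 1
          · subst hij; rw [g2, h2]
          · rw [g1 i (by omega), h1 i (by omega)]
    rw [walk]
    cases hz : Nat.beq (Nat.land (Nat.shiftRight t (Nat.mul 8 (f j))) av) 0 with
    | false => exact main
    | true =>
      rw [← main]
      have hz' := Nat.eq_of_beq_eq_true hz
      rw [hz']
      simp only [cond_true]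
      have : ∀ w, tb 0 w = false := by intro w; rw [tb_eq]; simp
      simp [this]

lemma mem_foldr_acc {α : Type*} (m : α) (W : ℕ → List α → List α) (Q : ℕ → Prop)
    (l : List ℕ) (acc : List α)
    (h : ∀ w ∈ l, ∀ acc, m ∈ W w acc ↔ m ∈ acc ∨ Q w) :
    m ∈ List.foldr W acc l ↔ m ∈ acc ∨ ∃ w ∈ l, Q w := by
  have := mem_foldr_cond m (fun _ => true) W Q l acc (fun w hw _ => h w hw)
  simpa using this

lemma mem_walks (t m k : ℕ) : m ∈ walks t k ↔ ∃ f : ℕ → ℕ, f 0 < 8 ∧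
    (∀ i, 0 < i → i ≤ k - 1 → Step t (f 0) f i) ∧ t.testBit (8 * f (k-1) + f 0) = true ∧
      m = edm f (k-1) ||| bt (f (k-1)) (f 0) := by
  unfold walks
  rw [mem_foldr_acc m _ (fun s => ∃ f : ℕ → ℕ, f 0 = s ∧
    (∀ i, 0 < i → i ≤ k - 1 → Step t (f 0) f i) ∧ t.testBit (8 * f (k-1) + f 0) = true ∧
      m = edm f (k-1) ||| bt (f (k-1)) (f 0))]
  · constructor
    · rintro (h | ⟨s, hs, f, rfl, h⟩)
      · simp at h
      · exact ⟨f, (mem_range8 _).1 hs, h⟩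
    · rintro ⟨f, h0, h⟩
      exact Or.inr ⟨f 0, (mem_range8 _).2 h0, f, rfl, h⟩
  · intro s hs acc
    rw [mem_range8] at hs
    have := mem_walk t m (k-1) (fun _ => s) 0 (Nat.sub 256 (Nat.shiftLeft 2 s)) acc (by
      intro w hw
      have : (Nat.sub 256 (Nat.shiftLeft 2 s)).testBit w = true ↔ s < w := by
        revert s w
        decide
      rw [this]
      constructor
      · intro h
        exact ⟨h, fun _ _ => by omega⟩
      · exact fun h => h.1)
    rw [show edm (fun _ => s) 0 = 0 from rfl] at this
    refine this.trans (or_congr Iff.rfl (exists_congr fun f => ?_))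
    simp only [zero_add]
    constructor
    · rintro ⟨h1, h2⟩
      have := h1 0 le_rfl
      rw [this]
      exact ⟨rfl, h2⟩
    · rintro ⟨h1, h2⟩
      rw [h1] at h2
      refine ⟨fun i hi => ?_, h2⟩
      obtain rfl : i = 0 := by omega
      exact h1

lemma walks_mono {t t' : ℕ} (h : ∀ i, t.testBit i = true → t'.testBit i = true) (k m : ℕ)
    (hm : m ∈ walks t k) : m ∈ walks t' k := by
  rw [mem_walks] at hm ⊢
  obtain ⟨f, h0, h1, h2, h3⟩ := hm
  refine ⟨f, h0, fun i hi hi' => ?_, h _ h2, h3⟩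
  obtain ⟨s1, s2, s3, s4⟩ := h1 i hi hi'
  exact ⟨s1, s2, s3, h _ s4⟩

/-- The graph of a mask. -/
def gr (t : ℕ) : SimpleGraph (Fin 8) where
  Adj a b := a ≠ b ∧ t.testBit (8 * a.val + b.val) = true ∧ t.testBit (8 * b.val + a.val) = true
  symm := ⟨fun _ _ h => ⟨h.1.symm, h.2.2, h.2.1⟩⟩
  loopless := ⟨fun _ h => h.1 rfl⟩

instance (t : ℕ) : DecidableRel (gr t).Adj := fun a b =>
  inferInstanceAs (Decidable (a ≠ b ∧ _ ∧ _))

/-- Symmetric masks. -/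
def Sy (t : ℕ) : Prop :=
  ∀ a b : Fin 8, t.testBit (8 * a.val + b.val) = true → t.testBit (8 * b.val + a.val) = true

/-- `m` is the mask of the cyclic sequence `F`. -/
def IsMask {n : ℕ} (m : ℕ) (F : Fin (n+3) → Fin 8) : Prop :=
  ∀ e, m.testBit e = true ↔ ∃ i, (bt (F i).val (F (i+1)).val).testBit e = true

lemma fin_succ_val {n : ℕ} (i : Fin (n+3)) (h : i.val < n + 2) : (i+1).val = i.val + 1 := by
  rw [Fin.val_add_one]
  split_ifs with hh
  · rw [hh] at h; simp at h
  · rfl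

lemma fin_last_succ {n : ℕ} (i : Fin (n+3)) (h : i.val = n + 2) : i + 1 = 0 := by
  have : i = Fin.last (n+2) := Fin.ext h
  rw [this]; simp

lemma mem_walks_iff {t : ℕ} (ht : Sy t) (n m : ℕ) : m ∈ walks t (n+3) ↔
    ∃ F : Fin (n+3) → Fin 8, (∀ i, (gr t).Adj (F i) (F (i+1))) ∧ Function.Injective F ∧
      IsMask m F := by
  rw [mem_walks]
  simp only [show n + 3 - 1 = n + 2 by omega]
  constructor
  · rintro ⟨f, h0, h1, h2, rfl⟩
    have hlt : ∀ i : Fin (n+3), f i.val < 8 := by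
      intro i
      rcases Nat.eq_zero_or_pos i.val with h | h
      · rw [h]; exact h0
      · exact (h1 i.val h (by omega)).1
    let F : Fin (n+3) → Fin 8 := fun i => ⟨f i.val, hlt i⟩
    have hinj : Function.Injective F := by
      intro i j hij
      have hij' : f i.val = f j.val := congrArg Fin.val hij
      rcases lt_trichotomy i.val j.val with h | h | h
      · exact absurd hij' ((h1 j.val (by omega) (by omega)).2.2.1 _ h)
      · exact Fin.ext h
      · exact absurd hij'.symm ((h1 i.val (by omega) (by omega)).2.2.1 _ h)
    refine ⟨F, ?_, hinj, ?_⟩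
    · intro i
      have hne : F i ≠ F (i+1) := by
        intro h
        have := hinj h
        simp at this
      have hb : t.testBit (8 * (F i).val + (F (i+1)).val) = true := by
        by_cases hi : i.val < n + 2
        · change t.testBit (8 * f i.val + f (i+1).val) = true
          rw [fin_succ_val i hi]
          exact (h1 (i.val+1) (by omega) (by omega)).2.2.2
        · have hi' : i.val = n + 2 := by omega
          rw [fin_last_succ i hi']
          change t.testBit (8 * f i.val + f 0) = true
          rw [hi']; exact h2
      exact ⟨hne, hb, ht _ _ hb⟩
    · intro e
      rw [Nat.testBit_or, Bool.or_eq_true, testBit_edm]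
      constructor
      · rintro (⟨i, hi, h⟩ | h)
        · refine ⟨⟨i, by omega⟩, ?_⟩
          change (bt (f i) (f ((⟨i, by omega⟩ : Fin (n+3)) + 1).val)).testBit e = true
          rw [fin_succ_val _ hi]
          exact h
        · refine ⟨⟨n+2, by omega⟩, ?_⟩
          rw [fin_last_succ _ rfl]
          exact h
      · rintro ⟨i, h⟩
        by_cases hi : i.val < n + 2
        · refine Or.inl ⟨i.val, hi, ?_⟩
          change (bt (f i.val) (f (i+1).val)).testBit e = true at h
          rwa [fin_succ_val i hi] at h
        · have hi' : i.val = n + 2 := by omega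
          rw [fin_last_succ i hi'] at h
          change (bt (f i.val) (f 0)).testBit e = true at h
          rw [hi'] at h
          exact Or.inr h
  · rintro ⟨F0, hadj0, hinj0, hm0⟩
    obtain ⟨c, hc⟩ := Finite.exists_min F0
    let F : Fin (n+3) → Fin 8 := fun i => F0 (i + c)
    have hadj : ∀ i, (gr t).Adj (F i) (F (i+1)) := by
      intro i
      have := hadj0 (i + c)
      rwa [add_right_comm] at this
    have hinj : Function.Injective F := fun i j h => add_right_cancel (hinj0 h)
    have hmin : ∀ i, F 0 ≤ F i := by
      intro i
      change F0 (0 + c) ≤ _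
      rw [zero_add]; exact hc _
    have hm : IsMask m F := by
      intro e
      rw [hm0 e]
      constructor
      · rintro ⟨i, h⟩
        refine ⟨i - c, ?_⟩
        change (bt (F0 (i - c + c)).val (F0 (i - c + 1 + c)).val).testBit e = true
        rwa [add_right_comm, sub_add_cancel]
      · rintro ⟨i, h⟩
        refine ⟨i + c, ?_⟩
        rw [add_right_comm]
        exact h
    clear_value F
    clear hm0 hinj0 hadj0 hc
    let f : ℕ → ℕ := fun i => if h : i < n + 3 then (F ⟨i, h⟩).val else 0
    have hf : ∀ i : Fin (n+3), f i.val = (F i).val := by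
      intro i
      simp [f]
    have hf0 : f 0 = (F 0).val := hf 0
    have hfl : f (n+2) = (F (Fin.last (n+2))).val := hf (Fin.last (n+2))
    have hl0 : Fin.last (n+2) + 1 = 0 := by simp
    refine ⟨f, ?_, ?_, ?_, ?_⟩
    · rw [hf0]; exact (F 0).2
    · intro i hi hi'
      have e1 := hf ⟨i, by omega⟩
      have e2 := hf ⟨i-1, by omega⟩
      simp only at e1 e2
      refine ⟨?_, ?_, ?_, ?_⟩
      · rw [e1]; exact (F _).2
      · rw [hf0, e1]
        have h1 := hmin ⟨i, by omega⟩
        have h2 : F 0 ≠ F ⟨i, by omega⟩ := by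
          intro h
          have := congrArg Fin.val (hinj h)
          simp at this
          omega
        exact lt_of_le_of_ne h1 (fun h => h2 (Fin.ext h))
      · intro i' hi2
        have e3 := hf ⟨i', by omega⟩
        simp only at e3
        rw [e1, e3]
        intro h
        have := congrArg Fin.val (hinj (Fin.ext h))
        simp at this
        omega
      · rw [e1, e2]
        have := (hadj ⟨i-1, by omega⟩).2.1
        have e4 : (⟨i-1, by omega⟩ : Fin (n+3)) + 1 = ⟨i, by omega⟩ := by
          apply Fin.ext
          rw [fin_succ_val _ (by simp only; omega)]
          simp only
          omega
        rwa [e4] at this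
    · rw [hf0, hfl]
      have := (hadj (Fin.last (n+2))).2.1
      rwa [hl0] at this
    · apply Nat.eq_of_testBit_eq
      intro e
      rw [Bool.eq_iff_iff, hm e, Nat.testBit_or, Bool.or_eq_true, testBit_edm, hf0, hfl]
      constructor
      · rintro ⟨i, h⟩
        by_cases hi : i.val < n + 2
        · refine Or.inl ⟨i.val, hi, ?_⟩
          rw [← fin_succ_val i hi, hf, hf]
          exact h
        · have hi' : i = Fin.last (n+2) := Fin.ext (by simp; omega)
          subst hi'
          rw [hl0] at h
          exact Or.inr h
      · rintro (⟨i, hi, h⟩ | h)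
        · refine ⟨⟨i, by omega⟩, ?_⟩
          rw [← hf, ← hf, fin_succ_val _ (by simpa using hi)]
          exact h
        · refine ⟨Fin.last (n+2), ?_⟩
          rw [hl0]
          exact h

/-- The subgraph of `gr t` with edge mask `m`. -/
def sub (t m : ℕ) : (gr t).Subgraph where
  verts := {a | ∃ b, (gr t).Adj a b ∧ (gr m).Adj a b}
  Adj a b := (gr t).Adj a b ∧ (gr m).Adj a b
  adj_sub h := h.1
  edge_vert h := ⟨_, h⟩
  symm := ⟨fun _ _ h => ⟨h.1.symm, h.2.symm⟩⟩

lemma testBit_bt_fin (a b c d : Fin 8) : (bt a.val b.val).testBit (8 * c.val + d.val) = true ↔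
    (c = a ∧ d = b) ∨ (d = a ∧ c = b) := by
  rw [testBit_bt]
  simp only [Fin.ext_iff]
  omega

lemma sub_eq {t n m : ℕ} {F : Fin (n+3) → Fin 8} (h : ∀ i, (gr t).Adj (F i) (F (i+1)))
    (hm : IsMask m F) : sub t m = cycSub F h := by
  have hA : ∀ a b, (sub t m).Adj a b ↔ (cycSub F h).Adj a b := by
    intro a b
    constructor
    · rintro ⟨-, -, h2, -⟩
      obtain ⟨i, hi⟩ := (hm _).1 h2
      exact ⟨i, (testBit_bt_fin _ _ _ _).1 hi⟩
    · rintro ⟨i, hi⟩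
      have hab : (gr t).Adj a b := (cycSub F h).adj_sub ⟨i, hi⟩
      exact ⟨hab, hab.1, (hm _).2 ⟨i, (testBit_bt_fin _ _ _ _).2 hi⟩,
        (hm _).2 ⟨i, (testBit_bt_fin _ _ _ _).2 (by tauto)⟩⟩
  refine SimpleGraph.Subgraph.ext ?_ ?_
  · ext a
    constructor
    · rintro ⟨b, hb⟩
      exact (cycSub F h).edge_vert ((hA a b).1 hb)
    · rintro ⟨i, rfl⟩
      exact ⟨F (i+1), (hA _ _).2 ⟨i, Or.inl ⟨rfl, rfl⟩⟩⟩
  · funext a b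
    exact propext (hA a b)

lemma exists_mask {n : ℕ} (F : Fin (n+3) → Fin 8) : ∃ m, IsMask m F := by
  obtain ⟨m, hm⟩ := exists_bits (fun e => ∃ i, (bt (F i).val (F (i+1)).val).testBit e = true) 64
  refine ⟨m, fun e => ?_⟩
  rw [hm]
  constructor
  · exact fun h => h.2
  · rintro ⟨i, h⟩
    refine ⟨?_, i, h⟩
    rw [testBit_bt] at h
    omega

lemma mask_unique {t m m' n : ℕ} {F : Fin (n+3) → Fin 8}
    (h : ∀ i, (gr t).Adj (F i) (F (i+1)))
    (hm : IsMask m F)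
    (hs : sub t m = sub t m') (e : ℕ) (he : m.testBit e = true) : m'.testBit e = true := by
  obtain ⟨i, hi⟩ := (hm e).1 he
  have h1 : (sub t m).Adj (F i) (F (i+1)) := by
    rw [sub_eq h hm]
    exact ⟨i, Or.inl ⟨rfl, rfl⟩⟩
  rw [hs] at h1
  rcases (testBit_bt _ _ _).1 hi with rfl | rfl
  · exact h1.2.2.1
  · exact h1.2.2.2

/-- Membership test. -/
def memb (a : ℕ) : List ℕ → Bool
  | [] => false
  | b :: l => cond (Nat.beq a b) true (memb a l)

/-- Number of distinct entries. -/
def cnt : List ℕ → ℕ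
  | [] => 0
  | a :: l => cond (memb a l) (cnt l) (Nat.succ (cnt l))

lemma memb_iff (a : ℕ) (l : List ℕ) : memb a l = true ↔ a ∈ l := by
  induction l with
  | nil => simp [memb]
  | cons b l ih =>
    rw [memb]
    cases h : Nat.beq a b with
    | true => simp [Nat.eq_of_beq_eq_true h]
    | false =>
      have := Nat.ne_of_beq_eq_false h
      simp [this, ih]

lemma cnt_eq (l : List ℕ) : cnt l = l.toFinset.card := by
  induction l with
  | nil => rfl
  | cons b l ih =>
    rw [cnt, List.toFinset_cons]
    cases h : memb b l with
    | true =>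
      have := (memb_iff _ _).1 h
      rw [Finset.insert_eq_of_mem (by simpa using this)]
      exact ih
    | false =>
      have : b ∉ l := by
        rw [← memb_iff, h]; simp
      rw [Finset.card_insert_of_notMem (by simpa using this), ← ih]
      rfl

lemma cycleCount_gr {t : ℕ} (ht : Sy t) (n : ℕ) :
    cycleCount (gr t) (n+3) = cnt (walks t (n+3)) := by
  rw [cnt_eq, ← Set.ncard_coe_finset]
  have : {H : (gr t).Subgraph | Nonempty (H.coe ≃g cycleGraph (n+3))} =
      sub t '' ((walks t (n+3)).toFinset : Set ℕ) := by
    ext H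
    rw [Set.mem_ofPred_eq, cycle_iff]
    constructor
    · rintro ⟨F, h, hF, rfl⟩
      obtain ⟨m, hm⟩ := exists_mask F
      refine ⟨m, ?_, sub_eq h hm⟩
      simp only [List.coe_toFinset, Set.mem_ofPred_eq]
      exact (mem_walks_iff ht n m).2 ⟨F, h, hF, hm⟩
    · rintro ⟨m, hm, rfl⟩
      simp only [List.coe_toFinset, Set.mem_ofPred_eq] at hm
      obtain ⟨F, h, hF, hm⟩ := (mem_walks_iff ht n m).1 hm
      exact ⟨F, h, hF, sub_eq h hm⟩
  unfold cycleCount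
  rw [this, Set.InjOn.ncard_image]
  intro m hm m' hm' hs
  simp only [List.coe_toFinset, Set.mem_ofPred_eq] at hm hm'
  obtain ⟨F, h, hF, hm⟩ := (mem_walks_iff ht n m).1 hm
  obtain ⟨F', h', hF', hm'⟩ := (mem_walks_iff ht n m').1 hm'
  apply Nat.eq_of_testBit_eq
  intro e
  rw [Bool.eq_iff_iff]
  exact ⟨mask_unique h hm hs e, mask_unique h' hm' hs.symm e⟩

/-! ### The search over chord sets -/

/-- Some length has more than two cycles. -/
def tooMany (g : ℕ) : Bool :=
  List.any [3,4,5,6,7,8] (fun k => Nat.ble 3 (cnt (walks g k)))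

/-- Either some length does not have exactly two cycles, or `g` is in the list. -/
def leaf (good : List ℕ) (g : ℕ) : Bool :=
  List.any [3,4,5,6,7,8] (fun k => not (Nat.beq 2 (cnt (walks g k)))) || memb g good

/-- Branch on the presence of every chord. -/
def search (good : List ℕ) : List ℕ → ℕ → Bool
  | [], g => leaf good g
  | c :: cs, g =>
    and (search good cs g) (or (tooMany (Nat.lor g c)) (search good cs (Nat.lor g c)))

/-- The union of `g` and of those chords of the list that are contained in `t`. -/
def tot (t : ℕ) : List ℕ → ℕ → ℕ
  | [], g => g
  | c :: cs, g => if c &&& t = c then tot t cs (g ||| c) else tot t cs g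

lemma testBit_tot (t : ℕ) (cs : List ℕ) (g i : ℕ) : (tot t cs g).testBit i = true ↔
    g.testBit i = true ∨ ∃ c ∈ cs, c &&& t = c ∧ c.testBit i = true := by
  induction cs generalizing g with
  | nil => simp [tot]
  | cons c cs ih =>
    rw [tot]
    split_ifs with h
    · rw [ih, Nat.testBit_or, Bool.or_eq_true]
      simp only [List.mem_cons, exists_eq_or_imp, h, true_and]
      rw [or_assoc]
    · rw [ih]
      simp only [List.mem_cons, exists_eq_or_imp, h, false_and, false_or]

lemma search_sound (good : List ℕ) {t : ℕ}
    (h2 : ∀ k ∈ [3,4,5,6,7,8], cnt (walks t k) = 2) (cs : List ℕ) (g : ℕ)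
    (ht : t = tot t cs g) (hs : search good cs g = true) : t ∈ good := by
  induction cs generalizing g with
  | nil =>
    obtain rfl : t = g := ht
    rw [search, leaf, Bool.or_eq_true] at hs
    rcases hs with hs | hs
    · rw [List.any_eq_true] at hs
      obtain ⟨k, hk, hk'⟩ := hs
      rw [h2 k hk] at hk'
      simp at hk'
    · exact (memb_iff _ _).1 hs
  | cons c cs ih =>
    rw [search, Bool.and_eq_true, Bool.or_eq_true] at hs
    obtain ⟨hs1, hs2⟩ := hs
    rw [tot] at ht
    split_ifs at ht with hc
    · rcases hs2 with hs2 | hs2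
      · exfalso
        rw [tooMany, List.any_eq_true] at hs2
        obtain ⟨k, hk, hk'⟩ := hs2
        have h3 := Nat.le_of_ble_eq_true hk'
        have h4 := h2 k hk
        rw [cnt_eq] at h3 h4
        have h5 : (walks (Nat.lor g c) k).toFinset ⊆ (walks t k).toFinset := by
          intro m hm
          rw [List.mem_toFinset] at hm ⊢
          refine walks_mono (fun i hi => ?_) k m hm
          rw [ht]
          exact (testBit_tot t cs _ i).2 (Or.inl hi)
        have := Finset.card_le_card h5
        omega
      · exact ih _ ht hs2
    · exact ih _ ht hs1

/-- The mask of the outer 8-cycle. -/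
def rim : ℕ := 4728867741804135810

/-- The chords other than `02`. -/
def chordsA : List ℕ :=
  [(0,3),(0,4),(0,5),(0,6),(1,3),(1,4),(1,5),(1,6),(1,7),(2,4),(2,5),(2,6),(2,7),(3,5),(3,6),
    (3,7),(4,6),(4,7),(5,7)].map (fun p => bt p.1 p.2)

/-- The chords that do not cut off a triangle. -/
def chordsB : List ℕ :=
  [(0,3),(0,4),(0,5),(1,4),(1,5),(1,6),(2,5),(2,6),(2,7),(3,6),(3,7),(4,7)].map
    (fun p => bt p.1 p.2)

/-- The two graphs. -/
def target : Fin 2 → ℕ := ![4728868841349385638, 5881789796200418694]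

/-- The solutions that contain the chord `02`. -/
def good : List ℕ := [4728868841349385638, 4731119542725184902, 5881789796200418694,
  4872987327928698246, 4875234730767517062, 6025904984242750854]

lemma good_iso : ∀ g ∈ good, ∃ i : Fin 2, Nonempty (gr g ≃g gr (target i)) := by
  have key : ∀ (g : ℕ) (i : Fin 2) (p : Fin 8 → Fin 8), Function.Injective p →
      (∀ a b, (gr (target i)).Adj (p a) (p b) ↔ (gr g).Adj a b) →
      ∃ i : Fin 2, Nonempty (gr g ≃g gr (target i)) := by
    intro g i p hp h
    refine ⟨i, ⟨⟨Equiv.ofBijective p (Finite.injective_iff_bijective.1 hp), ?_⟩⟩⟩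
    intro a b
    exact h a b
  intro g hg
  simp only [good, List.mem_cons, List.not_mem_nil, or_false] at hg
  rcases hg with rfl | rfl | rfl | rfl | rfl | rfl
  · exact key _ 0 ![0, 1, 2, 3, 4, 5, 6, 7] (by decide +kernel) (by decide +kernel)
  · exact key _ 0 ![3, 1, 2, 0, 7, 6, 5, 4] (by decide +kernel) (by decide +kernel)
  · exact key _ 1 ![0, 1, 2, 3, 4, 5, 6, 7] (by decide +kernel) (by decide +kernel)
  · exact key _ 0 ![1, 2, 0, 7, 6, 5, 4, 3] (by decide +kernel) (by decide +kernel)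
  · exact key _ 1 ![1, 2, 0, 7, 6, 5, 4, 3] (by decide +kernel) (by decide +kernel)
  · exact key _ 0 ![1, 2, 3, 4, 5, 6, 7, 0] (by decide +kernel) (by decide +kernel)

lemma searchA : search good chordsA (rim ||| bt 0 2) = true := by decide +kernel

lemma searchB : search [] chordsB rim = true := by decide +kernel

lemma eq_tot {t : ℕ} (ht : Sy t)
    (hb : ∀ i, t.testBit i = true → ∃ a b : Fin 8, a ≠ b ∧ i = 8 * a.val + b.val)
    (cs : List ℕ) (g : ℕ) (hg : ∀ a b : Fin 8, a ≠ b →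
      g.testBit (8 * a.val + b.val) = true → t.testBit (8 * a.val + b.val) = true)
    (hg' : ∀ i, g.testBit i = true → ∃ a b : Fin 8, a ≠ b ∧ i = 8 * a.val + b.val)
    (hc : ∀ a b : Fin 8, a ≠ b → t.testBit (8 * a.val + b.val) = true →
      g.testBit (8 * a.val + b.val) = true ∨ bt a.val b.val ∈ cs) :
    t = tot t cs g := by
  apply Nat.eq_of_testBit_eq
  intro i
  rw [Bool.eq_iff_iff, testBit_tot]
  constructor
  · intro hi
    obtain ⟨a, b, hab, rfl⟩ := hb i hi
    rcases hc a b hab hi with h | h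
    · exact Or.inl h
    · refine Or.inr ⟨_, h, ?_, (testBit_bt _ _ _).2 (Or.inl rfl)⟩
      apply Nat.eq_of_testBit_eq
      intro j
      rw [Nat.testBit_and, Bool.eq_iff_iff, Bool.and_eq_true]
      constructor
      · exact fun h => h.1
      · intro hj
        refine ⟨hj, ?_⟩
        rcases (testBit_bt _ _ _).1 hj with rfl | rfl
        · exact hi
        · exact ht _ _ hi
  · rintro (h | ⟨c, -, h1, h2⟩)
    · obtain ⟨a, b, hab, rfl⟩ := hg' i h
      exact hg a b hab h
    · rw [← h1, Nat.testBit_and, Bool.and_eq_true] at h2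
      exact h2.2

lemma rim_bits : ∀ i, (rim ||| bt 0 2).testBit i = true →
    ∃ a b : Fin 8, a ≠ b ∧ i = 8 * a.val + b.val := by
  intro i hi
  have hlt : i < 64 := by
    by_contra hge
    rw [Nat.testBit_lt_two_pow (lt_of_lt_of_le (b := 2 ^ 64) (by decide)
      (Nat.pow_le_pow_right (by norm_num) (by omega)))] at hi
    simp at hi
  have : ∀ i : Fin 64, (rim ||| bt 0 2).testBit i.val = true →
      ∃ a b : Fin 8, a ≠ b ∧ i.val = 8 * a.val + b.val := by decide +kernel
  exact this ⟨i, hlt⟩ hi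

lemma coverA : ∀ a b : Fin 8, a ≠ b → (rim ||| bt 0 2).testBit (8 * a.val + b.val) = true ∨
    bt a.val b.val ∈ chordsA := by decide +kernel

lemma coverB : ∀ a b : Fin 8, a ≠ b → rim.testBit (8 * a.val + b.val) = true ∨
    bt a.val b.val ∈ chordsB ∨ b = a + 2 ∨ a = b + 2 := by decide +kernel

lemma rim_adj : ∀ a b : Fin 8, rim.testBit (8 * a.val + b.val) = true →
    b = a + 1 ∨ a = b + 1 := by decide +kernel

lemma rimA_adj : ∀ a b : Fin 8, (rim ||| bt 0 2).testBit (8 * a.val + b.val) = true →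
    b = a + 1 ∨ a = b + 1 ∨ (a = 0 ∧ b = 2) ∨ (a = 2 ∧ b = 0) := by decide +kernel

lemma target_sy (i : Fin 2) : Sy (target i) := by
  unfold Sy
  revert i
  decide +kernel

lemma target_cnt : ∀ i : Fin 2, ∀ k ∈ [3,4,5,6,7,8], cnt (walks (target i) k) = 2 := by
  decide +kernel

lemma target_deg : ∀ v, (gr (target 1)).degree v ≤ 3 := by decide +kernel

lemma target_degsum : ∀ i, ∑ v, (gr (target i)).degree v = 22 := by decide +kernel

/-- Every graph containing a spanning 8-cycle, after renaming vertices, is a mask graph. -/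
lemma main_aux {W : Type} [Fintype W] (G : SimpleGraph W) (F : Fin 8 ≃ W)
    (hF : ∀ i, G.Adj (F i) (F (i+1)))
    (h02 : G.Adj (F 0) (F 2) ∨ ∀ i, ¬ G.Adj (F i) (F (i+2)))
    (hG : ∀ n < 6, cycleCount G (n+3) = 2) :
    ∃ i : Fin 2, Nonempty (G ≃g gr (target i)) := by
  obtain ⟨t, ht⟩ := exists_bits
    (fun e => ∃ a b : Fin 8, G.Adj (F a) (F b) ∧ e = 8 * a.val + b.val) 64
  have hta : ∀ a b : Fin 8, t.testBit (8 * a.val + b.val) = true ↔ G.Adj (F a) (F b) := by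
    intro a b
    rw [ht]
    constructor
    · rintro ⟨-, a', b', h, he⟩
      have h1 : a = a' := Fin.ext (by omega)
      have h2 : b = b' := Fin.ext (by omega)
      rw [h1, h2]; exact h
    · intro h
      exact ⟨by omega, a, b, h, rfl⟩
  have hsy : Sy t := by
    intro a b h
    rw [hta] at h ⊢
    exact h.symm
  have hb : ∀ i, t.testBit i = true → ∃ a b : Fin 8, a ≠ b ∧ i = 8 * a.val + b.val := by
    intro i hi
    obtain ⟨-, a, b, h, he⟩ := (ht i).1 hi
    refine ⟨a, b, ?_, he⟩
    rintro rfl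
    exact h.ne rfl
  have e : gr t ≃g G := ⟨F, by
    intro a b
    constructor
    · intro h
      refine ⟨?_, (hta _ _).2 h, (hta _ _).2 h.symm⟩
      rintro rfl
      exact h.ne rfl
    · intro h
      exact (hta _ _).1 h.2.1⟩
  have h2 : ∀ k ∈ [3,4,5,6,7,8], cnt (walks t k) = 2 := by
    intro k hk
    obtain ⟨n, hn, rfl⟩ : ∃ n, n < 6 ∧ k = n + 3 := by
      refine ⟨k - 3, ?_⟩
      simp only [List.mem_cons, List.not_mem_nil, or_false] at hk
      omega
    rw [← cycleCount_gr hsy, cycleCount_iso e, hG n hn]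
  have hmem : t ∈ good := by
    rcases h02 with h02 | h02
    · refine search_sound good h2 chordsA (rim ||| bt 0 2) (eq_tot hsy hb _ _ ?_ rim_bits ?_)
        searchA
      · intro a b _ h
        rw [hta]
        rcases rimA_adj a b h with rfl | rfl | ⟨rfl, rfl⟩ | ⟨rfl, rfl⟩
        · exact hF a
        · exact (hF b).symm
        · exact h02
        · exact h02.symm
      · intro a b hab _
        exact coverA a b hab
    · have := search_sound [] h2 chordsB rim (eq_tot hsy hb _ _ ?_ ?_ ?_) searchB
      · simp at this
      · intro a b _ h
        rw [hta]
        rcases rim_adj a b h with rfl | rfl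
        · exact hF a
        · exact (hF b).symm
      · intro i hi
        exact rim_bits i (by rw [Nat.testBit_or, hi, Bool.true_or])
      · intro a b hab h
        rw [hta] at h
        rcases coverB a b hab with h' | h' | rfl | rfl
        · exact Or.inl h'
        · exact Or.inr h'
        · exact absurd h (h02 a)
        · exact absurd h.symm (h02 b)
  obtain ⟨i, ⟨f⟩⟩ := good_iso t hmem
  exact ⟨i, ⟨e.symm.trans f⟩⟩

theorem two_pancyclic_count_order_8 : ExactlyNUpToIso 2 2 8 13 := by
  refine ⟨fun i => gr (target i), ?_, ?_, ?_⟩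
  · have key : (gr (target 0) ≃g gr (target 1)) → False := by
      intro e
      have hs : ∀ x y : Fin 8, x ≠ y → e x ≠ e y := fun x y h h' => h (e.injective h')
      have h1 : (gr (target 1)).Adj (e 0) (e 1) := e.map_adj_iff.2 (by decide +kernel)
      have h2 : (gr (target 1)).Adj (e 0) (e 2) := e.map_adj_iff.2 (by decide +kernel)
      have h5 : (gr (target 1)).Adj (e 0) (e 5) := e.map_adj_iff.2 (by decide +kernel)
      have h7 : (gr (target 1)).Adj (e 0) (e 7) := e.map_adj_iff.2 (by decide +kernel)
      have hle : ({e 1, e 2, e 5, e 7} : Finset (Fin 8)) ⊆ (gr (target 1)).neighborFinset (e 0) := by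
        intro x hx
        simp only [Finset.mem_insert, Finset.mem_singleton] at hx
        rw [mem_neighborFinset]
        rcases hx with rfl | rfl | rfl | rfl <;> assumption
      have hc := Finset.card_le_card hle
      rw [card_neighborFinset_eq_degree] at hc
      have hd := target_deg (e 0)
      rw [Finset.card_insert_of_notMem, Finset.card_insert_of_notMem,
        Finset.card_insert_of_notMem, Finset.card_singleton] at hc
      · omega
      all_goals simp [e.injective.eq_iff]
    intro i j hij
    refine ⟨fun e => ?_⟩
    fin_cases i <;> fin_cases j
    · exact hij rfl
    · exact key e
    · exact key e.symm
    · exact hij rfl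
  · intro i
    refine ⟨⟨by simp, ?_⟩, ?_⟩
    · intro k h3 h8
      rw [Fintype.card_fin] at h8
      obtain ⟨n, rfl⟩ : ∃ n, k = n + 3 := ⟨k - 3, by omega⟩
      rw [cycleCount_gr (target_sy i)]
      apply target_cnt
      simp only [List.mem_cons, List.not_mem_nil, or_false]
      omega
    · rw [Set.ncard_eq_toFinset_card']
      change (gr (target i)).edgeFinset.card ≤ 13
      have := target_degsum i
      rw [sum_degrees_eq_twice_card_edges] at this
      omega
  · intro W _ G hW _ hP
    have hG : ∀ n < 6, cycleCount G (n+3) = 2 := by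
      intro n hn
      exact hP.2 (n+3) (by omega) (by omega)
    have h8 := hG 5 (by norm_num)
    obtain ⟨H, hH⟩ : {H : G.Subgraph | Nonempty (H.coe ≃g cycleGraph (5+3))}.Nonempty := by
      apply Set.nonempty_of_ncard_ne_zero
      unfold cycleCount at h8
      omega
    obtain ⟨F, hF, hinj, -⟩ := (cycle_iff H).1 hH
    have hbij : Function.Bijective F :=
      (Fintype.bijective_iff_injective_and_card F).2 ⟨hinj, by rw [hW]; simp⟩
    by_cases h : ∃ c, G.Adj (F c) (F (c+2))
    · obtain ⟨c, hc⟩ := h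
      refine main_aux G ((Equiv.addLeft c).trans (Equiv.ofBijective F hbij)) ?_ (Or.inl ?_) hG
      · intro i
        change G.Adj (F (c + i)) (F (c + (i+1)))
        rw [← add_assoc]
        exact hF _
      · change G.Adj (F (c + 0)) (F (c + 2))
        rw [add_zero]
        exact hc
    · push Not at h
      exact main_aux G (Equiv.ofBijective F hbij) hF (Or.inr h) hG
end

section
/- There are, up to isomorphism, exactly two (2)-pancyclic graphs on 13 vertices with at most 18 edges. -/
open SimpleGraph

namespace PC

/-- An injective homomorphism identifies a subgraph with its image. -/
noncomputable def mapIso {V W : Type*} {G : SimpleGraph V} {G' : SimpleGraph W} (f : G →g G')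
    (hf : Function.Injective f) (H : G.Subgraph) : H.coe ≃g (H.map f).coe where
  toEquiv := Equiv.Set.image f H.verts hf
  map_rel_iff' := by
    rintro ⟨u, hu⟩ ⟨v, hv⟩
    simp only [Subgraph.coe_adj, Subgraph.map_adj, Relation.map_apply]
    constructor
    · rintro ⟨x, y, h, hx, hy⟩
      have hx' : x = u := hf hx
      have hy' : y = v := hf hy
      subst hx' hy'
      exact h
    · intro h
      exact ⟨u, v, h, rfl, rfl⟩

theorem map_inj {V W : Type*} {G : SimpleGraph V} {G' : SimpleGraph W} (f : G →g G')
    (hf : Function.Injective f) : Function.Injective (Subgraph.map f) := by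
  intro H H' h
  have hv : Set.image f H.verts = Set.image f H'.verts := congrArg Subgraph.verts h
  have ha : ∀ u v, (H.map f).Adj u v ↔ (H'.map f).Adj u v := fun u v => by rw [h]
  ext u v
  · rw [Set.image_injective.2 hf hv]
  · have := ha (f u) (f v)
    simp only [Subgraph.map_adj, Relation.map_apply] at this
    constructor
    · intro h1
      obtain ⟨x, y, h, hx, hy⟩ := this.1 ⟨u, v, h1, rfl, rfl⟩
      rwa [← hf hx, ← hf hy]
    · intro h1
      obtain ⟨x, y, h, hx, hy⟩ := this.2 ⟨u, v, h1, rfl, rfl⟩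
      rwa [← hf hx, ← hf hy]

theorem cycleCount_le_of_hom {V W : Type*} [Finite W] {G : SimpleGraph V} {G' : SimpleGraph W}
    (f : G →g G') (hf : Function.Injective f) (k : ℕ) : cycleCount G k ≤ cycleCount G' k := by
  unfold cycleCount
  apply Set.ncard_le_ncard_of_injOn (Subgraph.map f)
  · rintro H ⟨e⟩
    exact ⟨(mapIso f hf H).symm.trans e⟩
  · exact (map_inj f hf).injOn

theorem cycleCount_iso {V W : Type*} [Finite V] [Finite W] {G : SimpleGraph V}
    {G' : SimpleGraph W} (e : G ≃g G') (k : ℕ) : cycleCount G k = cycleCount G' k :=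
  le_antisymm (cycleCount_le_of_hom e.toHom e.injective k)
    (cycleCount_le_of_hom e.symm.toHom e.symm.injective k)

theorem cycleCount_mono {V : Type*} [Finite V] {G G' : SimpleGraph V} (h : G ≤ G') (k : ℕ) :
    cycleCount G k ≤ cycleCount G' k :=
  cycleCount_le_of_hom (Hom.ofLE h) (fun _ _ h => h) k

/-- `f` is a path with `n` steps from `cur` to `b`, avoiding `vis` after its start. -/
def IsP {V : Type*} (G : SimpleGraph V) (b : V) (n : ℕ) (vis : Finset V) (cur : V)
    (f : Fin (n + 1) → V) : Prop :=
  f 0 = cur ∧ f (Fin.last n) = b ∧ Function.Injective f ∧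
    (∀ i : Fin n, G.Adj (f i.castSucc) (f i.succ)) ∧ ∀ i : Fin n, f i.succ ∉ vis

noncomputable def pcount {V : Type*} (G : SimpleGraph V) (b : V) (n : ℕ) (vis : Finset V)
    (cur : V) : ℕ := {f | IsP G b n vis cur f}.ncard

/-- The graph `G` with the edge `ab` added. -/
def addEdge {V : Type*} (G : SimpleGraph V) (a b : V) : SimpleGraph V := G ⊔ edge a b

theorem addEdge_adj {V : Type*} (G : SimpleGraph V) {a b : V} (hab : a ≠ b) (u v : V) :
    (addEdge G a b).Adj u v ↔ G.Adj u v ∨ (u = a ∧ v = b) ∨ (u = b ∧ v = a) := by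
  unfold addEdge
  rw [sup_adj, edge_adj]
  constructor
  · rintro (h | ⟨h, -⟩)
    · exact Or.inl h
    · rcases h with ⟨h1, h2⟩ | ⟨h1, h2⟩
      · exact Or.inr (Or.inl ⟨h1, h2⟩)
      · exact Or.inr (Or.inr ⟨h1, h2⟩)
  · rintro (h | ⟨rfl, rfl⟩ | ⟨rfl, rfl⟩)
    · exact Or.inl h
    · exact Or.inr ⟨Or.inl ⟨rfl, rfl⟩, hab⟩
    · exact Or.inr ⟨Or.inr ⟨rfl, rfl⟩, hab.symm⟩

theorem cyc_adj {m : ℕ} {u v : Fin (m + 3)} :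
    (cycleGraph (m + 3)).Adj u v ↔ v = u + 1 ∨ u = v + 1 := by
  rw [cycleGraph_adj]
  rw [sub_eq_iff_eq_add, sub_eq_iff_eq_add, or_comm, add_comm 1, add_comm 1]

theorem succ_cases {m : ℕ} (i : Fin (m + 3)) :
    (i = Fin.last (m + 2) ∧ i + 1 = 0) ∨ ∃ j : Fin (m + 2), i = j.castSucc ∧ i + 1 = j.succ := by
  rcases Fin.eq_castSucc_or_eq_last i with ⟨j, rfl⟩ | rfl
  · right; exact ⟨j, rfl, by simp⟩
  · left; simp

section
variable {V : Type*} {G : SimpleGraph V} {a b : V} {m : ℕ}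

theorem isP_hom (hab : a ≠ b) {f : Fin (m + 3) → V} (hf : IsP G b (m + 2) {a} a f)
    {i j : Fin (m + 3)} (h : (cycleGraph (m + 3)).Adj i j) : (addEdge G a b).Adj (f i) (f j) := by
  obtain ⟨h0, hl, -, hadj, -⟩ := hf
  have key : ∀ i : Fin (m + 3), (addEdge G a b).Adj (f i) (f (i + 1)) := by
    intro i
    rw [addEdge_adj G hab]
    rcases succ_cases i with ⟨h1, h2⟩ | ⟨j, h1, h2⟩
    · right; right
      rw [h2, h1]; exact ⟨hl, h0⟩
    · left
      rw [h2, h1]; exact hadj j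
  rcases cyc_adj.1 h with rfl | rfl
  · exact key _
  · exact (key _).symm

/-- The cycle obtained by closing a path. -/
def closeP (hab : a ≠ b) (f : Fin (m + 3) → V) (hf : IsP G b (m + 2) {a} a f) :
    (addEdge G a b).Subgraph :=
  Subgraph.map (⟨f, fun h => isP_hom hab hf h⟩ : cycleGraph (m + 3) →g addEdge G a b) ⊤

theorem closeP_adj (hab : a ≠ b) (f : Fin (m + 3) → V) (hf : IsP G b (m + 2) {a} a f) (u v : V) :
    (closeP hab f hf).Adj u v ↔ ∃ i j, (cycleGraph (m + 3)).Adj i j ∧ f i = u ∧ f j = v := by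
  simp only [closeP, Subgraph.map_adj, Relation.map_apply, Subgraph.top_adj]
  rfl

theorem closeP_verts (hab : a ≠ b) (f : Fin (m + 3) → V) (hf : IsP G b (m + 2) {a} a f) :
    (closeP hab f hf).verts = Set.range f := by
  simp only [closeP, Subgraph.map_verts, Subgraph.verts_top, Set.image_univ]
  rfl

theorem last_add_one : Fin.last (m + 2) + 1 = (0 : Fin (m + 3)) := by simp

theorem closeP_inj (hab : a ≠ b) (f g : Fin (m + 3) → V) (hf : IsP G b (m + 2) {a} a f)
    (hg : IsP G b (m + 2) {a} a g) (h : closeP hab f hf = closeP hab g hg) : f = g := by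
  have key : ∀ n : ℕ, ∀ x : Fin (m + 3), x.val = n → f x = g x ∧ f (x - 1) = g (x - 1) := by
    intro n
    induction n with
    | zero =>
      intro x hx
      have hx : x = 0 := Fin.ext hx
      subst hx
      have : (0 : Fin (m + 3)) - 1 = Fin.last (m + 2) := by
        rw [sub_eq_iff_eq_add, last_add_one]
      rw [this]
      exact ⟨by rw [hf.1, hg.1], by rw [hf.2.1, hg.2.1]⟩
    | succ n ih =>
      intro z hz
      have hlt : n < m + 3 := by omega
      obtain ⟨x, hx⟩ : ∃ x : Fin (m + 3), x.val = n := ⟨⟨n, hlt⟩, rfl⟩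
      have hzx : z = x + 1 := by
        apply Fin.ext
        rw [Fin.val_add_one_of_lt']
        · omega
        · omega
      subst hzx
      have ih := ih x hx
      rw [add_sub_cancel_right]
      refine ⟨?_, ih.1⟩
      have h1 : (closeP hab f hf).Adj (f x) (f (x + 1)) :=
        (closeP_adj hab f hf _ _).2 ⟨x, x + 1, cyc_adj.2 (Or.inl rfl), rfl, rfl⟩
      rw [h, closeP_adj, ih.1] at h1
      obtain ⟨i, j, hij, hi, hj⟩ := h1
      have hi' := hg.2.2.1 hi
      rw [hi'] at hij
      rcases cyc_adj.1 hij with rfl | h2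
      · exact hj.symm
      · exfalso
        have hj' : j = x - 1 := by rw [h2]; simp
        rw [hj', ← ih.2] at hj
        have := hf.2.2.1 hj
        rw [sub_eq_iff_eq_add, add_assoc x 1 1] at this
        have h4 : (1 + 1 : Fin (m + 3)) = 0 := left_eq_add.1 this
        have := congrArg Fin.val h4
        rw [Fin.val_add] at this
        simp only [Fin.val_one, Fin.val_zero] at this
        rw [Nat.mod_eq_of_lt (by omega)] at this
        omega
  funext i
  exact (key i.val i rfl).1

theorem closeP_surj (hab : a ≠ b) (H : (addEdge G a b).Subgraph)
    (e : H.coe ≃g cycleGraph (m + 3)) (h : H.Adj a b) :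
    ∃ (f : Fin (m + 3) → V) (hf : IsP G b (m + 2) {a} a f), closeP hab f hf = H := by
  have ha := H.edge_vert h
  have hb := H.edge_vert h.symm
  -- a bijection sending 0 to a and last to b
  have hσ : ∃ σ : cycleGraph (m + 3) ≃g cycleGraph (m + 3),
      σ 0 = e ⟨a, ha⟩ ∧ σ (Fin.last (m + 2)) = e ⟨b, hb⟩ := by
    have had : (cycleGraph (m + 3)).Adj (e ⟨a, ha⟩) (e ⟨b, hb⟩) :=
      e.map_rel_iff.2 (by simpa using h)
    generalize e ⟨a, ha⟩ = x at had
    generalize e ⟨b, hb⟩ = y at had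
    have hl : (Fin.last (m + 2) : Fin (m + 3)) = -1 := by
      rw [eq_neg_iff_add_eq_zero, last_add_one]
    rcases cyc_adj.1 had with rfl | rfl
    · refine ⟨⟨Equiv.subLeft x, ?_⟩, sub_zero x, ?_⟩
      · intro u v
        simp only [Equiv.subLeft_apply]
        rw [cycleGraph_adj, cycleGraph_adj, sub_sub_sub_cancel_left, sub_sub_sub_cancel_left,
          or_comm]
      · change x - Fin.last (m + 2) = x + 1
        rw [hl]; simp
    · refine ⟨⟨Equiv.addRight (y + 1), ?_⟩, ?_, ?_⟩
      · intro u v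
        change (cycleGraph (m + 3)).Adj (u + (y + 1)) (v + (y + 1)) ↔ _
        rw [cycleGraph_adj, cycleGraph_adj, add_sub_add_right_eq_sub, add_sub_add_right_eq_sub]
      · change 0 + (y + 1) = y + 1
        simp
      · change Fin.last (m + 2) + (y + 1) = y
        rw [hl]; abel
  obtain ⟨σ, h0, hl⟩ := hσ
  let E := σ.trans e.symm
  have hE : ∀ i j, H.Adj (E i) (E j) ↔ (cycleGraph (m + 3)).Adj i j := by
    intro i j
    have := E.map_rel_iff (a := i) (b := j)
    simpa using this
  have hEinj : Function.Injective (fun i => (E i : V)) :=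
    Subtype.val_injective.comp E.injective
  have hE0 : (E 0 : V) = a := by
    change ((e.symm (σ 0)) : V) = a
    rw [h0]; simp
  have hEl : (E (Fin.last (m + 2)) : V) = b := by
    change ((e.symm (σ _)) : V) = b
    rw [hl]; simp
  have hP : IsP G b (m + 2) {a} a (fun i => (E i : V)) := by
    refine ⟨hE0, hEl, hEinj, ?_, ?_⟩
    · intro i
      have h1 : H.Adj (E i.castSucc) (E i.succ) := by
        rw [hE, cyc_adj]; left; simp
      have h2 := (addEdge_adj G hab _ _).1 h1.adj_sub
      rcases h2 with h2 | ⟨h2, h3⟩ | ⟨h2, h3⟩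
      · exact h2
      · exfalso
        have h2 := congrArg Fin.val (hEinj (h2.trans hE0.symm))
        have h3 := congrArg Fin.val (hEinj (h3.trans hEl.symm))
        rw [Fin.val_succ, Fin.val_last] at h3
        rw [Fin.val_castSucc, Fin.val_zero] at h2
        omega
      · exfalso
        have h2 := congrArg Fin.val (hEinj (h2.trans hEl.symm))
        simp at h2
        omega
    · intro i hi
      have hi' := Finset.mem_singleton.1 hi
      have := congrArg Fin.val (hEinj (hi'.trans hE0.symm))
      simp at this
  refine ⟨_, hP, ?_⟩
  ext u v
  · rw [closeP_verts]
    constructor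
    · rintro ⟨i, rfl⟩; exact (E i).2
    · intro hu
      refine ⟨E.symm ⟨u, hu⟩, ?_⟩
      simp
  · rw [closeP_adj]
    constructor
    · rintro ⟨i, j, hij, rfl, rfl⟩
      exact (hE i j).2 hij
    · intro huv
      have hu := H.edge_vert huv
      have hv := H.edge_vert huv.symm
      refine ⟨E.symm ⟨u, hu⟩, E.symm ⟨v, hv⟩, ?_, by simp, by simp⟩
      rw [← hE]; simpa using huv

theorem cycleCount_addEdge [Finite V] (hab : a ≠ b) (hn : ¬ G.Adj a b) :
    cycleCount (addEdge G a b) (m + 3) = cycleCount G (m + 3) + pcount G b (m + 2) {a} a := by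
  have hle : G ≤ addEdge G a b := le_sup_left
  have hinj : Function.Injective (Hom.ofLE hle) := fun _ _ h => h
  have e1 : cycleCount G (m + 3) =
      {H : (addEdge G a b).Subgraph | Nonempty (H.coe ≃g cycleGraph (m + 3)) ∧ ¬ H.Adj a b}.ncard := by
    unfold cycleCount
    rw [← Set.ncard_image_of_injective _ (map_inj (Hom.ofLE hle) hinj)]
    congr 1
    ext H
    simp only [Set.mem_image, Set.mem_ofPred_eq]
    constructor
    · rintro ⟨H', ⟨e⟩, rfl⟩
      refine ⟨⟨(mapIso _ hinj H').symm.trans e⟩, ?_⟩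
      rintro ⟨x, y, hxy, hx, hy⟩
      have h1 := hxy.adj_sub
      rw [show x = a from hx, show y = b from hy] at h1
      exact hn h1
    · rintro ⟨⟨e⟩, hH⟩
      let H' : G.Subgraph :=
        { verts := H.verts
          Adj := H.Adj
          adj_sub := by
            intro u v h
            rcases (addEdge_adj G hab u v).1 h.adj_sub with h' | ⟨rfl, rfl⟩ | ⟨rfl, rfl⟩
            · exact h'
            · exact absurd h hH
            · exact absurd h.symm hH
          edge_vert := fun h => H.edge_vert h
          symm := H.symm }
      have hm : H'.map (Hom.ofLE hle) = H := by
        ext u v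
        · simp [H']
        · simp only [Subgraph.map_adj, Relation.map_apply]
          constructor
          · rintro ⟨x, y, hxy, rfl, rfl⟩; exact hxy
          · intro h; exact ⟨u, v, h, rfl, rfl⟩
      exact ⟨H', ⟨(mapIso _ hinj H').trans (hm ▸ e)⟩, hm⟩
  have e2 : pcount G b (m + 2) {a} a =
      {H : (addEdge G a b).Subgraph | Nonempty (H.coe ≃g cycleGraph (m + 3)) ∧ H.Adj a b}.ncard := by
    unfold pcount
    refine Set.ncard_congr (fun f hf => closeP hab f hf) ?_ ?_ ?_
    · intro f hf
      refine ⟨⟨?_⟩, ?_⟩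
      · exact (mapIso (⟨f, fun h => isP_hom hab hf h⟩ : cycleGraph (m + 3) →g addEdge G a b)
          hf.2.2.1 ⊤).symm.trans Subgraph.topIso
      · rw [closeP_adj]
        exact ⟨0, Fin.last _, cyc_adj.2 (Or.inr last_add_one.symm), hf.1, hf.2.1⟩
    · intro f g hf hg h
      exact closeP_inj hab f g hf hg h
    · rintro H ⟨⟨e⟩, h⟩
      exact closeP_surj hab H e h
  rw [e1, e2]
  unfold cycleCount
  rw [← Set.ncard_union_eq]
  · congr 1
    ext H
    simp only [Set.mem_ofPred_eq, Set.mem_union]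
    tauto
  · rw [Set.disjoint_left]
    rintro H h1 h2
    exact h1.2 h2.2
end

theorem cycleCount_bot {V : Type*} {m : ℕ} : cycleCount (⊥ : SimpleGraph V) (m + 3) = 0 := by
  unfold cycleCount
  have : {H : (⊥ : SimpleGraph V).Subgraph | Nonempty (H.coe ≃g cycleGraph (m + 3))} = ∅ := ?_
  · rw [this, Set.ncard_empty]
  ext H
  simp only [Set.mem_ofPred_eq, Set.mem_empty_iff_false, iff_false]
  rintro ⟨e⟩
  have h : (cycleGraph (m + 3)).Adj 0 1 := cyc_adj.2 (Or.inl (by simp))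
  have := e.symm.map_rel_iff.2 h
  exact this.adj_sub

end PC

namespace PC
section
variable {V : Type*} (G : SimpleGraph V) (b : V)

theorem pcount_zero [DecidableEq V] (vis : Finset V) (cur : V) :
    pcount G b 0 vis cur = if cur = b then 1 else 0 := by
  unfold pcount
  have hs : Subsingleton (Fin (0 + 1)) := inferInstanceAs (Subsingleton (Fin 1))
  split_ifs with h
  · subst h
    rw [Set.ncard_eq_one]
    refine ⟨fun _ => cur, ?_⟩
    ext f
    constructor
    · intro hf
      funext i
      rw [Subsingleton.elim i 0]
      exact hf.1
    · rintro rfl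
      exact ⟨rfl, rfl, fun _ _ _ => Subsingleton.elim _ _, fun i => i.elim0, fun i => i.elim0⟩
  · have : {f | IsP G b 0 vis cur f} = ∅ := by
      ext f
      simp only [Set.mem_ofPred_eq, Set.mem_empty_iff_false, iff_false]
      intro hf
      exact h (hf.1.symm.trans hf.2.1)
    rw [this, Set.ncard_empty]

theorem pcount_self (n : ℕ) (vis : Finset V) : pcount G b (n + 1) vis b = 0 := by
  unfold pcount
  have : {f | IsP G b (n + 1) vis b f} = ∅ := by
    ext f
    simp only [Set.mem_ofPred_eq, Set.mem_empty_iff_false, iff_false]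
    intro hf
    have h1 := hf.2.2.1 (hf.1.trans hf.2.1.symm)
    have h2 := congrArg Fin.val h1
    simp at h2
  rw [this, Set.ncard_empty]

theorem isP_cons [DecidableEq V] {n : ℕ} {vis : Finset V} {cur : V} (hc : cur ∈ vis)
    {g : Fin (n + 1) → V} {w : V} (h : IsP G b n (insert w vis) w g) (h1 : G.Adj cur w)
    (h2 : w ∉ vis) : IsP G b (n + 1) vis cur (Fin.cons cur g) := by
  obtain ⟨h0, hl, hi, ha, hv⟩ := h
  have hg : ∀ i, g i ∉ vis := by
    intro i
    refine Fin.cases ?_ (fun j => ?_) i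
    · rw [h0]; exact h2
    · intro h; exact hv j (Finset.mem_insert_of_mem h)
  refine ⟨rfl, ?_, ?_, ?_, ?_⟩
  · rw [← Fin.succ_last, Fin.cons_succ, hl]
  · rw [Fin.cons_injective_iff]
    refine ⟨?_, hi⟩
    rintro ⟨i, hi⟩
    exact hg i (hi ▸ hc)
  · intro i
    refine Fin.cases ?_ (fun j => ?_) i
    · simp only [Fin.castSucc_zero, Fin.cons_zero, Fin.cons_succ, h0]; exact h1
    · rw [← Fin.succ_castSucc]
      simp only [Fin.cons_succ]
      exact ha j
  · intro i
    rw [Fin.cons_succ]; exact hg i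

theorem isP_tail [DecidableEq V] {n : ℕ} {vis : Finset V} {cur : V}
    {f : Fin (n + 2) → V} (h : IsP G b (n + 1) vis cur f) :
    IsP G b n (insert (f 1) vis) (f 1) (Fin.tail f) ∧ G.Adj cur (f 1) ∧ f 1 ∉ vis := by
  obtain ⟨h0, hl, hi, ha, hv⟩ := h
  refine ⟨⟨rfl, ?_, ?_, ?_, ?_⟩, ?_, ?_⟩
  · rw [Fin.tail, Fin.succ_last, hl]
  · exact hi.comp (Fin.succ_injective _)
  · intro i
    have := ha i.succ
    rwa [← Fin.succ_castSucc] at this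
  · intro i
    rw [Finset.mem_insert, not_or]
    refine ⟨?_, hv _⟩
    intro h
    have := congrArg Fin.val (hi h)
    simp at this
  · have := ha 0
    simpa [h0] using this
  · exact hv 0

theorem pcount_succ [Fintype V] [DecidableEq V] [DecidableRel G.Adj] (n : ℕ) (vis : Finset V)
    (cur : V) (hc : cur ∈ vis) :
    pcount G b (n + 1) vis cur =
      ∑ w ∈ Finset.univ.filter (fun w => G.Adj cur w ∧ w ∉ vis), pcount G b n (insert w vis) w := by
  classical
  unfold pcount
  simp only [Set.ncard_eq_toFinset_card', Set.toFinset_ofPred]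
  rw [Finset.card_eq_sum_card_fiberwise (f := fun f => f 1)
    (t := Finset.univ.filter (fun w => G.Adj cur w ∧ w ∉ vis))]
  · apply Finset.sum_congr rfl
    intro w hw
    rw [Finset.mem_filter] at hw
    symm
    refine Finset.card_bij (fun g _ => Fin.cons cur g) ?_ ?_ ?_
    · intro g hg
      rw [Finset.mem_filter] at hg
      rw [Finset.mem_filter, Finset.mem_filter]
      exact ⟨⟨Finset.mem_univ _, isP_cons G b hc hg.2 hw.2.1 hw.2.2⟩, hg.2.1⟩
    · intro g _ g' _ h
      exact Fin.cons_right_injective _ h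
    · intro f hf
      rw [Finset.mem_filter, Finset.mem_filter] at hf
      obtain ⟨⟨-, hf⟩, rfl⟩ := hf
      refine ⟨Fin.tail f, ?_, ?_⟩
      · rw [Finset.mem_filter]
        exact ⟨Finset.mem_univ _, (isP_tail G b hf).1⟩
      · rw [← hf.1]; exact Fin.cons_self_tail f
  · intro f hf
    rw [Finset.mem_coe, Finset.mem_filter] at hf
    rw [Finset.mem_coe, Finset.mem_filter]
    exact ⟨Finset.mem_univ _, (isP_tail G b hf.2).2⟩

end

open Polynomial

noncomputable def pathPoly {V : Type*} (G : SimpleGraph V) (b : V) (d : ℕ) (vis : Finset V)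
    (cur : V) : ℕ[X] := ∑ n ∈ Finset.range (d + 1), C (pcount G b n vis cur) * X ^ n

theorem pathPoly_coeff {V : Type*} (G : SimpleGraph V) (b : V) (d : ℕ) (vis : Finset V)
    (cur : V) (k : ℕ) :
    (pathPoly G b d vis cur).coeff k = if k ≤ d then pcount G b k vis cur else 0 := by
  unfold pathPoly
  simp only [finsetSum_coeff, coeff_C_mul_X_pow, Finset.sum_ite_eq, Finset.mem_range,
    Nat.lt_succ_iff]

theorem pathPoly_zero {V : Type*} [DecidableEq V] (G : SimpleGraph V) (b : V) (vis : Finset V)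
    (cur : V) : pathPoly G b 0 vis cur = if cur = b then 1 else 0 := by
  unfold pathPoly
  simp only [zero_add, Finset.range_one, Finset.sum_singleton, pcount_zero]
  split_ifs <;> simp

theorem pathPoly_self {V : Type*} [DecidableEq V] (G : SimpleGraph V) (b : V) (d : ℕ)
    (vis : Finset V) : pathPoly G b d vis b = 1 := by
  ext k
  rw [pathPoly_coeff, coeff_one]
  rcases k with - | k
  · simp [pcount_zero]
  · simp [pcount_self]

theorem pathPoly_succ {V : Type*} [Fintype V] [DecidableEq V] (G : SimpleGraph V)
    [DecidableRel G.Adj] (b : V) (d : ℕ) (vis : Finset V) (cur : V) (hc : cur ∈ vis)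
    (hb : cur ≠ b) : pathPoly G b (d + 1) vis cur =
      ∑ w ∈ Finset.univ.filter (fun w => G.Adj cur w ∧ w ∉ vis),
        X * pathPoly G b d (insert w vis) w := by
  ext k
  rw [pathPoly_coeff, finsetSum_coeff]
  rcases k with - | k
  · simp [pcount_zero, hb]
  · simp only [coeff_X_mul, pathPoly_coeff, Nat.succ_le_succ_iff]
    split_ifs
    · exact pcount_succ G b k vis cur hc
    · simp

end PC

namespace PC
/-- test that some base 16 digit of `v` is at least 3 -/
def isBad (v : Nat) : Bool := Nat.blt (nat_lit 0) (Nat.land (Nat.add (nat_lit 24019198012642645) v) (nat_lit 38430716820228232))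

noncomputable def found (s : Nat) : Nat := Bool.rec (Nat.succ s) (nat_lit 0) (isBad s)

noncomputable def lp (g : Nat → Nat → Nat) (fuel : Nat) : Nat → Nat → Nat :=
  Nat.rec (fun _ acc => Nat.succ acc) (fun _ ih m acc => Nat.rec (Nat.succ acc) (fun _ _ =>
     Nat.rec (nat_lit 0) (fun w _ =>
       Nat.rec (nat_lit 0) (fun acc' _ =>
         Nat.rec (nat_lit 0) (fun m' _ => ih m' acc') (Nat.succ (Nat.sub m (Nat.pow (nat_lit 2) w))))
        (g w acc)) (Nat.succ (Nat.log2 m))) m) fuel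

noncomputable def dfs (A b : Nat) (fuel : Nat) : Nat → Nat → Nat → Nat → Nat :=
  Nat.rec (fun cur _ wt acc => Bool.rec (Nat.succ acc) (found (Nat.add acc wt)) (Nat.beq cur b))
    (fun _ ih cur un wt acc => Bool.rec
       (Nat.rec (nat_lit 0) (fun m _ => Nat.rec (nat_lit 0) (fun wt' _ =>
         lp (fun w acc' => Nat.rec (nat_lit 0) (fun un' _ => ih w un' wt' acc')
             (Nat.succ (Nat.sub un (Nat.pow (nat_lit 2) w)))) (nat_lit 13) m acc)
           (Nat.succ (Nat.mul wt (nat_lit 16))))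
        (Nat.succ (Nat.land (Nat.shiftRight A (Nat.add (nat_lit 64) (Nat.mul (nat_lit 13) cur))) un)))
       (found (Nat.add acc wt)) (Nat.beq cur b)) fuel

def bitm (a b : Nat) : Nat := 2^(64+(13*a+b))
def addE (A a b : Nat) : Nat := Nat.lor (Nat.lor A (Nat.lor (bitm a b) (bitm b a))) (2^((13*a+b)%61))

noncomputable def newval (A val a b : Nat) : Nat :=
  dfs A b (nat_lit 12) a (Nat.sub (nat_lit 8191) (Nat.pow (nat_lit 2) a)) (nat_lit 16) val

noncomputable def filt (A val : Nat) (l : List (Nat × Nat × Nat)) : List (Nat × Nat × Nat) :=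
  List.rec [] (fun e _ ih => Prod.rec (fun a p => Prod.rec (fun b _ =>
     Nat.rec ih (fun v _ => (a, b, v) :: ih) (newval A val a b)) p) e) l

def target : Nat := 2 * (16^3+16^4+16^5+16^6+16^7+16^8+16^9+16^10+16^11+16^12+16^13)

noncomputable def force {α : Type} (x : Nat) (f : Nat → α) : α := Nat.rec (f x) (fun n _ => f n) (Nat.succ x)

noncomputable def loop (g : Nat → Nat → List (Nat × Nat × Nat) → Bool) (A : Nat) (l : List (Nat × Nat × Nat)) : Bool :=
  List.rec true (fun e tl ih => Bool.rec false ih (force (addE A e.1 e.2.1) fun A' => g A' e.2.2 tl)) l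

def memN (A : Nat) : List Nat → Bool
  | [] => false
  | a :: l => Nat.beq A a || memN A l

def leaf (sols : List Nat) (A val : Nat) : Bool := bif Nat.beq val target then memN A sols else true

noncomputable def go (sols : List Nat) (d : Nat) : Nat → Nat → List (Nat × Nat × Nat) → Bool :=
  Nat.rec (fun A val _ => leaf sols A val)
    (fun _ ih A val cs => Bool.rec false (loop ih A (filt A val cs)) (leaf sols A val)) d

end PC

namespace PC
open Polynomial

theorem land_digit (a b x y : ℕ) (ha : a < 16) (hb : b < 16) :
    (a + 16 * x) &&& (b + 16 * y) = (a &&& b) + 16 * (x &&& y) := by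
  have h1 := Nat.and_mod_two_pow (a := a + 16 * x) (b := b + 16 * y) (n := 4)
  have h2 := Nat.and_div_two_pow (a := a + 16 * x) (b := b + 16 * y) (n := 4)
  have e1 : (a + 16 * x) % 2 ^ 4 = a := by omega
  have e2 : (b + 16 * y) % 2 ^ 4 = b := by omega
  have e3 : (a + 16 * x) / 2 ^ 4 = x := by omega
  have e4 : (b + 16 * y) / 2 ^ 4 = y := by omega
  rw [e1, e2] at h1
  rw [e3, e4] at h2
  omega

def M5 : ℕ → ℕ
  | 0 => 0
  | n + 1 => 5 + 16 * M5 n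

def M8 : ℕ → ℕ
  | 0 => 0
  | n + 1 => 8 + 16 * M8 n

theorem eval_split (P : ℕ[X]) : P.eval 16 = P.coeff 0 + 16 * P.divX.eval 16 := by
  conv_lhs => rw [← X_mul_divX_add P]
  simp [add_comm]

theorem mask_spec (n : ℕ) : ∀ P : ℕ[X], (∀ k, P.coeff k ≤ 3) →
    ((P.eval 16 + M5 n) &&& M8 n = 0 ↔ ∀ k < n, P.coeff k ≤ 2) := by
  induction n with
  | zero => intro P _; simp [M8]
  | succ n ih =>
    intro P hP
    have ih := ih P.divX (fun k => by rw [coeff_divX]; exact hP _)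
    have e : P.eval 16 + M5 (n + 1) = (P.coeff 0 + 5) + 16 * (P.divX.eval 16 + M5 n) := by
      rw [eval_split P, M5]; ring
    have h0 := hP 0
    rw [e, M8, land_digit _ _ _ _ (by omega) (by omega)]
    have h8 : (P.coeff 0 + 5) &&& 8 = 0 ↔ P.coeff 0 ≤ 2 := by
      generalize P.coeff 0 = d at h0
      interval_cases d <;> decide
    simp only [coeff_divX] at ih
    constructor
    · intro h k hk
      rcases k with - | k
      · exact h8.1 (by omega)
      · exact ih.1 (by omega) k (by omega)
    · intro h
      have a1 := h8.2 (h 0 (by omega))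
      have a2 := ih.2 (fun k hk => h (k + 1) (by omega))
      omega

theorem blt_land (x y z : ℕ) :
    Nat.blt 0 (Nat.land (Nat.add y x) z) = false ↔ (x + y) &&& z = 0 := by
  have e : Nat.land (Nat.add y x) z = (x + y) &&& z := by rw [Nat.add_comm x y]; rfl
  rw [e]
  generalize (x + y) &&& z = t
  cases t with
  | zero => exact ⟨fun _ => rfl, fun _ => rfl⟩
  | succ t =>
    refine ⟨fun h => ?_, fun h => absurd h (Nat.succ_ne_zero t)⟩
    have h1 : Nat.ble 1 (t + 1) = true := Nat.ble_eq ▸ (by omega)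
    exact absurd (h.symm.trans h1) (by decide)

theorem isBad_spec (P : ℕ[X]) (hP : ∀ k, P.coeff k ≤ 3) :
    isBad (P.eval 16) = false ↔ ∀ k < 14, P.coeff k ≤ 2 := by
  rw [← mask_spec 14 P hP]
  have h5 : M5 14 = nat_lit 24019198012642645 := by decide
  have h8 : M8 14 = nat_lit 38430716820228232 := by decide
  unfold isBad
  rw [← h5, ← h8]
  generalize M5 14 = y
  generalize M8 14 = z
  exact blt_land _ y z

/-- `r` is the result of a computation with semantics `P`. -/
def Res (r : ℕ) (P : ℕ[X]) : Prop :=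
  (r = 0 → ∃ k, 2 < P.coeff k) ∧ ∀ n, r = n + 1 → n = P.eval 16 ∧ ∀ k, P.coeff k ≤ 2

theorem res_succ {acc : ℕ} {P : ℕ[X]} (h : acc = P.eval 16) (h2 : ∀ k, P.coeff k ≤ 2) :
    Res (Nat.succ acc) P :=
  ⟨fun h => absurd h (Nat.succ_ne_zero _), fun n hn => by
    have : n = acc := by omega
    rw [this]; exact ⟨h, h2⟩⟩

theorem found_eq (s : ℕ) :
    found s = Bool.rec (motive := fun _ => ℕ) (Nat.succ s) (nat_lit 0) (isBad s) := rfl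

theorem found_false {s : ℕ} (h : isBad s = false) : found s = Nat.succ s := by
  rw [found_eq]
  generalize isBad s = t at h
  rw [h]

theorem found_true {s : ℕ} (h : isBad s = true) : found s = 0 := by
  rw [found_eq]
  generalize isBad s = t at h
  rw [h]

theorem found_spec {acc : ℕ} {P : ℕ[X]} (h : acc = P.eval 16) (h2 : ∀ k, P.coeff k ≤ 2)
    (l : ℕ) (hl : l < 14) : Res (found (Nat.add acc (16 ^ l))) (P + X ^ l) := by
  have hc : ∀ k, (P + X ^ l).coeff k ≤ 3 := by
    intro k
    rw [coeff_add, coeff_X_pow]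
    have := h2 k
    split_ifs <;> omega
  have e : Nat.add acc (16 ^ l) = (P + X ^ l).eval 16 := by
    rw [eval_add, eval_pow, eval_X, ← h]; rfl
  have key := isBad_spec _ hc
  have hlow : ∀ k, k ≠ l → (P + X ^ l).coeff k ≤ 2 := by
    intro k hk
    rw [coeff_add, coeff_X_pow, if_neg hk]
    exact h2 k
  rw [e]
  rcases Bool.eq_false_or_eq_true (isBad ((P + X ^ l).eval 16)) with hb | hb
  · rw [found_true hb]
    refine ⟨fun _ => ?_, fun n hn => absurd hn.symm (Nat.succ_ne_zero n)⟩
    by_contra hcon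
    push Not at hcon
    have := key.2 (fun k _ => hcon k)
    exact Bool.noConfusion (hb.symm.trans this)
  · rw [found_false hb]
    refine res_succ rfl (fun k => ?_)
    by_cases hk : k = l
    · subst hk; exact key.1 hb k hl
    · exact hlow k hk

theorem testBit_sub_two_pow (w : ℕ) : ∀ (x i : ℕ), x.testBit w = true →
    (x - 2 ^ w).testBit i = (x.testBit i && decide (i ≠ w)) := by
  induction w with
  | zero =>
    intro x i h
    rw [Nat.testBit_zero] at h
    have h := of_decide_eq_true h
    rcases i with - | i
    · rw [Nat.testBit_zero]
      simp only [ne_eq, not_true_eq_false, decide_false, Bool.and_false, decide_eq_false_iff_not]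
      omega
    · rw [Nat.testBit_succ, Nat.testBit_succ]
      have : (x - 2 ^ 0) / 2 = x / 2 := by omega
      rw [this]; simp
  | succ w ih =>
    intro x i h
    rw [Nat.testBit_succ] at h
    have hp : 2 ^ (w + 1) = 2 * 2 ^ w := by ring
    have hge : 2 ^ w ≤ x / 2 := Nat.ge_two_pow_of_testBit h
    rcases i with - | i
    · rw [Nat.testBit_zero, Nat.testBit_zero]
      have : (x - 2 ^ (w + 1)) % 2 = x % 2 := by omega
      rw [this]; simp
    · rw [Nat.testBit_succ, Nat.testBit_succ]
      have : (x - 2 ^ (w + 1)) / 2 = x / 2 - 2 ^ w := by omega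
      rw [this, ih _ _ h]; simp

/-- set of bits -/
def bits (m : ℕ) : Finset (Fin 13) := Finset.univ.filter (fun w => m.testBit w.val = true)

theorem testBit_log2 {m : ℕ} (h : m ≠ 0) : m.testBit m.log2 = true := by
  have h1 := Nat.log2_self_le h
  have h2 := Nat.lt_log2_self (n := m)
  rw [Nat.testBit_eq_decide_div_mod_eq]
  have : m / 2 ^ m.log2 = 1 := by
    apply Nat.div_eq_of_lt_le
    · omega
    · rw [pow_succ] at h2; omega
  rw [this]; rfl

theorem lp_spec (g : ℕ → ℕ → ℕ) (T : Fin 13 → ℕ[X]) (fuel : ℕ) :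
    ∀ (m acc : ℕ) (P : ℕ[X]), fuel ≤ 13 → m < 2 ^ fuel → acc = P.eval 16 → (∀ k, P.coeff k ≤ 2) →
      (∀ w ∈ bits m, ∀ acc' (P' : ℕ[X]), acc' = P'.eval 16 → (∀ k, P'.coeff k ≤ 2) →
        Res (g w.val acc') (P' + T w)) →
      Res (lp g fuel m acc) (P + ∑ w ∈ bits m, T w) := by
  have hb0 : bits 0 = ∅ := by
    unfold bits; simp
  induction fuel with
  | zero =>
    intro m acc P _ hm ha h2 _
    have : m = 0 := by simpa using hm
    subst this
    rw [hb0, Finset.sum_empty, add_zero]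
    exact res_succ ha h2
  | succ n ih =>
    intro m acc P hf hm ha h2 hg
    rcases Nat.eq_zero_or_pos m with h0 | h0
    · subst h0
      rw [hb0, Finset.sum_empty, add_zero]
      exact res_succ ha h2
    · have hne : m ≠ 0 := by omega
      have hlog : m.log2 < n + 1 := (Nat.log2_lt hne).2 hm
      have htb := testBit_log2 hne
      have hup : m < 2 ^ (m.log2 + 1) := Nat.lt_log2_self
      let W : Fin 13 := ⟨m.log2, by omega⟩
      have hW : W ∈ bits m := by simp [bits, W, htb]
      have hbits : bits m = insert W (bits (m - 2 ^ m.log2)) := by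
        ext i
        simp only [bits, Finset.mem_filter, Finset.mem_univ, true_and, Finset.mem_insert]
        rw [testBit_sub_two_pow _ _ _ htb]
        by_cases hi : i = W
        · subst hi; simp [W, htb]
        · have : i.val ≠ m.log2 := fun h => hi (Fin.ext h)
          simp [hi, this]
      have hnot : W ∉ bits (m - 2 ^ m.log2) := by
        simp only [bits, Finset.mem_filter, Finset.mem_univ, true_and]
        rw [testBit_sub_two_pow _ _ _ htb]; simp [W]
      have hunf : lp g (n + 1) m acc = Nat.rec (nat_lit 0) (fun acc' _ =>
          lp g n (m - 2 ^ m.log2) acc') (g m.log2 acc) := by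
        obtain ⟨m', rfl⟩ : ∃ m', m = m' + 1 := ⟨m - 1, by omega⟩
        rfl
      have hres := hg W hW acc P ha h2
      change Res (g m.log2 acc) _ at hres
      rw [hunf, hbits, Finset.sum_insert hnot, ← add_assoc]
      generalize g m.log2 acc = r at hres
      rcases r with - | r
      · refine ⟨fun _ => ?_, fun n hn => absurd hn.symm (Nat.succ_ne_zero n)⟩
        obtain ⟨k, hk⟩ := hres.1 rfl
        exact ⟨k, by rw [coeff_add]; omega⟩
      · obtain ⟨hr, hr2⟩ := hres.2 r rfl
        refine ih (m - 2 ^ m.log2) r _ (by omega) ?_ hr hr2 ?_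
        · have : 2 ^ m.log2 ≤ 2 ^ n := Nat.pow_le_pow_right (by omega) (by omega)
          rw [pow_succ] at hup
          omega
        · intro w hw
          apply hg
          rw [hbits]; exact Finset.mem_insert_of_mem hw

def Enc (A : ℕ) (G : SimpleGraph (Fin 13)) : Prop :=
  ∀ u v : Fin 13, A.testBit (64 + (13 * u.val + v.val)) = true ↔ G.Adj u v

theorem dfs_found {A b d cur un wt acc : ℕ} (h : Nat.beq cur b = true) :
    dfs A b d cur un wt acc = found (Nat.add acc wt) := by
  cases d with
  | zero =>
    have e : dfs A b 0 cur un wt acc = Bool.rec (motive := fun _ => ℕ) (Nat.succ acc)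
      (found (Nat.add acc wt)) (Nat.beq cur b) := rfl
    rw [e, h]
  | succ d =>
    have e : ∃ y, dfs A b (d + 1) cur un wt acc = Bool.rec (motive := fun _ => ℕ) y
      (found (Nat.add acc wt)) (Nat.beq cur b) := ⟨_, rfl⟩
    obtain ⟨y, e⟩ := e
    rw [e, h]

theorem dfs_zero {A b cur un wt acc : ℕ} (h : Nat.beq cur b = false) :
    dfs A b 0 cur un wt acc = Nat.succ acc := by
  have e : dfs A b 0 cur un wt acc = Bool.rec (motive := fun _ => ℕ) (Nat.succ acc)
    (found (Nat.add acc wt)) (Nat.beq cur b) := rfl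
  rw [e, h]

theorem dfs_succ {A b d cur un wt acc : ℕ} (h : Nat.beq cur b = false) :
    dfs A b (d + 1) cur un wt acc =
      lp (fun w acc' => dfs A b d w (Nat.sub un (Nat.pow (nat_lit 2) w))
        (Nat.mul wt (nat_lit 16)) acc') (nat_lit 13)
        (Nat.land (Nat.shiftRight A (Nat.add (nat_lit 64) (Nat.mul (nat_lit 13) cur))) un) acc := by
  have e : dfs A b (d + 1) cur un wt acc = Bool.rec (motive := fun _ => ℕ)
    (lp (fun w acc' => dfs A b d w (Nat.sub un (Nat.pow (nat_lit 2) w))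
        (Nat.mul wt (nat_lit 16)) acc') (nat_lit 13)
        (Nat.land (Nat.shiftRight A (Nat.add (nat_lit 64) (Nat.mul (nat_lit 13) cur))) un) acc)
    (found (Nat.add acc wt)) (Nat.beq cur b) := rfl
  rw [e, h]

theorem beq_fin_false {a b : Fin 13} (h : a ≠ b) : Nat.beq a.val b.val = false := by
  rw [← Bool.not_eq_true, Nat.beq_eq]
  exact fun h' => h (Fin.ext h')

theorem dfs_spec {A : ℕ} {G : SimpleGraph (Fin 13)} (hA : Enc A G) (b : Fin 13) (d : ℕ) :
    ∀ (cur : Fin 13) (un len acc : ℕ) (vis : Finset (Fin 13)) (P : ℕ[X]), len + d ≤ 13 →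
      cur ∈ vis → un < 2 ^ 13 → (∀ w : Fin 13, un.testBit w.val = true ↔ w ∉ vis) →
      acc = P.eval 16 → (∀ k, P.coeff k ≤ 2) →
      Res (dfs A b.val d cur.val un (16 ^ len) acc) (P + X ^ len * pathPoly G b d vis cur) := by
  classical
  induction d with
  | zero =>
    intro cur un len acc vis P hlen hcv hun hvis ha h2
    rw [pathPoly_zero]
    by_cases hc : cur = b
    · rw [dfs_found (by rw [hc]; exact Nat.beq_refl _), if_pos hc, mul_one]
      exact found_spec ha h2 len (by omega)
    · rw [dfs_zero (beq_fin_false hc), if_neg hc, mul_zero, add_zero]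
      exact res_succ ha h2
  | succ d ih =>
    intro cur un len acc vis P hlen hcv hun hvis ha h2
    by_cases hc : cur = b
    · rw [dfs_found (by rw [hc]; exact Nat.beq_refl _), hc, pathPoly_self, mul_one]
      exact found_spec ha h2 len (by omega)
    · have e := dfs_succ (A := A) (d := d) (un := un) (wt := 16 ^ len) (acc := acc)
        (beq_fin_false hc)
      change _ = lp (fun w acc' => dfs A b.val d w (un - 2 ^ w) (16 ^ len * 16) acc') 13
            ((A >>> (64 + 13 * cur.val)) &&& un) acc at e
      have hbits : bits ((A >>> (64 + 13 * cur.val)) &&& un) =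
          Finset.univ.filter (fun w => G.Adj cur w ∧ w ∉ vis) := by
        ext w
        simp only [bits, Finset.mem_filter, Finset.mem_univ, true_and, Nat.testBit_and,
          Bool.and_eq_true, Nat.testBit_shiftRight]
        rw [hvis, add_assoc, hA]
      rw [e, pathPoly_succ G b d vis cur hcv hc, Finset.mul_sum, ← hbits]
      refine lp_spec _ _ 13 _ acc P le_rfl ?_ ha h2 ?_
      · exact lt_of_le_of_lt Nat.and_le_right hun
      · intro w hw acc' P' ha' h2'
        rw [hbits, Finset.mem_filter] at hw
        obtain ⟨-, hw1, hw2⟩ := hw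
        have := ih w (un - 2 ^ w.val) (len + 1) acc' (insert w vis) P' (by omega)
          (Finset.mem_insert_self _ _) (lt_of_le_of_lt (Nat.sub_le _ _) hun) ?_ ha' h2'
        · rw [← mul_assoc, ← pow_succ]
          rw [pow_succ 16 len] at this
          exact this
        · intro i
          rw [testBit_sub_two_pow _ _ _ ((hvis w).2 hw2), Bool.and_eq_true, hvis, decide_eq_true_iff,
            Finset.mem_insert, not_or, and_comm]
          simp [Fin.ext_iff]

end PC

namespace PC
open Polynomial

noncomputable def cyclePoly (G : SimpleGraph (Fin 13)) : ℕ[X] :=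
  ∑ k ∈ Finset.Icc 3 13, C (cycleCount G k) * X ^ k

theorem cyclePoly_coeff (G : SimpleGraph (Fin 13)) (k : ℕ) :
    (cyclePoly G).coeff k = if 3 ≤ k ∧ k ≤ 13 then cycleCount G k else 0 := by
  unfold cyclePoly
  simp only [finsetSum_coeff, coeff_C_mul_X_pow, Finset.sum_ite_eq, Finset.mem_Icc]

theorem pcount_one {G : SimpleGraph (Fin 13)} {a b : Fin 13} (h : ¬ G.Adj a b)
    (vis : Finset (Fin 13)) : pcount G b 1 vis a = 0 := by
  unfold pcount
  have : {f | IsP G b 1 vis a f} = ∅ := by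
    ext f
    simp only [Set.mem_ofPred_eq, Set.mem_empty_iff_false, iff_false]
    rintro ⟨h0, h1, -, ha, -⟩
    apply h
    have := ha 0
    rw [← h0, ← h1]
    exact this
  rw [this, Set.ncard_empty]

theorem cyclePoly_addEdge {G : SimpleGraph (Fin 13)} {a b : Fin 13} (hab : a ≠ b)
    (h : ¬ G.Adj a b) :
    cyclePoly (addEdge G a b) = cyclePoly G + X ^ 1 * pathPoly G b 12 {a} a := by
  ext k
  rw [coeff_add, cyclePoly_coeff, cyclePoly_coeff, pow_one]
  rcases k with - | - | - | m
  · simp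
  · simp [pathPoly_coeff, pcount_zero, hab]
  · simp [pathPoly_coeff, pcount_one h]
  · rw [coeff_X_mul, pathPoly_coeff]
    by_cases hm : m ≤ 10
    · have h1 : 3 ≤ m + 1 + 1 + 1 ∧ m + 1 + 1 + 1 ≤ 13 := by omega
      have h2 : m + 1 + 1 ≤ 12 := by omega
      rw [if_pos h1, if_pos h1, if_pos h2]
      exact cycleCount_addEdge hab h
    · have h1 : ¬ (3 ≤ m + 1 + 1 + 1 ∧ m + 1 + 1 + 1 ≤ 13) := by omega
      have h2 : ¬ (m + 1 + 1 ≤ 12) := by omega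
      rw [if_neg h1, if_neg h1, if_neg h2]

/-- The state `(A, val)` of the search describes the graph `G`. -/
def St (A val : ℕ) (G : SimpleGraph (Fin 13)) : Prop :=
  Enc A G ∧ val = (cyclePoly G).eval 16 ∧ ∀ k, (cyclePoly G).coeff k ≤ 2

theorem newval_spec {A val : ℕ} {G : SimpleGraph (Fin 13)} (hS : St A val G) {a b : Fin 13}
    (hab : a ≠ b) (h : ¬ G.Adj a b) :
    Res (newval A val a.val b.val) (cyclePoly (addEdge G a b)) := by
  rw [cyclePoly_addEdge hab h]
  have := dfs_spec hS.1 b 12 a (8191 - 2 ^ a.val) 1 val {a} (cyclePoly G) (by omega)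
    (Finset.mem_singleton_self a) (lt_of_le_of_lt (Nat.sub_le _ _) (by norm_num)) ?_ hS.2.1 hS.2.2
  · exact this
  · have key : ∀ a w : Fin 13, (8191 - 2 ^ a.val).testBit w.val = true ↔ w ≠ a := by decide +kernel
    intro w
    rw [key, Finset.mem_singleton]

theorem addE_enc {A : ℕ} {G : SimpleGraph (Fin 13)} (hA : Enc A G) {a b : Fin 13}
    (hab : a ≠ b) : Enc (addE A a.val b.val) (addEdge G a b) := by
  intro u v
  rw [addEdge_adj G hab, ← hA u v]
  change ((A ||| (bitm a b ||| bitm b a)) ||| _).testBit _ = true ↔ _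
  simp only [bitm, Nat.testBit_or, Nat.testBit_two_pow, Bool.or_eq_true, decide_eq_true_iff,
    Fin.ext_iff]
  have := a.2; have := b.2; have := u.2; have := v.2
  constructor
  · rintro ((h | h | h) | h)
    · exact Or.inl h
    · right; left; omega
    · right; right; omega
    · omega
  · rintro (h | h | h)
    · exact Or.inl (Or.inl h)
    · left; right; left; omega
    · left; right; right; omega

theorem st_step {A val y : ℕ} {G : SimpleGraph (Fin 13)} (hS : St A val G) {a b : Fin 13}
    (hab : a ≠ b) (h : ¬ G.Adj a b) (hy : newval A val a.val b.val = y + 1) :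
    St (addE A a.val b.val) y (addEdge G a b) :=
  ⟨addE_enc hS.1 hab, (newval_spec hS hab h).2 y hy⟩

def Good (G : SimpleGraph (Fin 13)) : Prop := ∀ k, 3 ≤ k → k ≤ 13 → cycleCount G k = 2

theorem good_coeff {G : SimpleGraph (Fin 13)} (h : Good G) (k : ℕ) :
    (cyclePoly G).coeff k ≤ 2 := by
  rw [cyclePoly_coeff]
  split_ifs with h1
  · exact (h k h1.1 h1.2).le
  · omega

theorem eval_cyclePoly (G : SimpleGraph (Fin 13)) :
    (cyclePoly G).eval 16 = cycleCount G 3 * 16 ^ 3 + cycleCount G 4 * 16 ^ 4 +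
      cycleCount G 5 * 16 ^ 5 + cycleCount G 6 * 16 ^ 6 + cycleCount G 7 * 16 ^ 7 +
      cycleCount G 8 * 16 ^ 8 + cycleCount G 9 * 16 ^ 9 + cycleCount G 10 * 16 ^ 10 +
      cycleCount G 11 * 16 ^ 11 + cycleCount G 12 * 16 ^ 12 + cycleCount G 13 * 16 ^ 13 := by
  have : Finset.Icc 3 13 = {3, 4, 5, 6, 7, 8, 9, 10, 11, 12, 13} := by decide
  unfold cyclePoly
  rw [this]
  simp
  ring

theorem good_eval {G : SimpleGraph (Fin 13)} (h : Good G) : (cyclePoly G).eval 16 = target := by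
  rw [eval_cyclePoly]
  rw [h 3 (by omega) (by omega), h 4 (by omega) (by omega), h 5 (by omega) (by omega),
    h 6 (by omega) (by omega), h 7 (by omega) (by omega), h 8 (by omega) (by omega),
    h 9 (by omega) (by omega), h 10 (by omega) (by omega), h 11 (by omega) (by omega),
    h 12 (by omega) (by omega), h 13 (by omega) (by omega)]
  rfl

theorem digits_two {c3 c4 c5 c6 c7 c8 c9 c10 c11 c12 c13 : ℕ}
    (h3 : c3 ≤ 2) (h4 : c4 ≤ 2) (h5 : c5 ≤ 2) (h6 : c6 ≤ 2)
    (h7 : c7 ≤ 2) (h8 : c8 ≤ 2) (h9 : c9 ≤ 2) (h10 : c10 ≤ 2)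
    (h11 : c11 ≤ 2) (h12 : c12 ≤ 2) (h13 : c13 ≤ 2)
    (h : c3 * 16 ^ 3 +
      c4 * 16 ^ 4 +
      c5 * 16 ^ 5 +
      c6 * 16 ^ 6 +
      c7 * 16 ^ 7 +
      c8 * 16 ^ 8 +
      c9 * 16 ^ 9 +
      c10 * 16 ^ 10 +
      c11 * 16 ^ 11 +
      c12 * 16 ^ 12 +
      c13 * 16 ^ 13 = target) :
    c3 = 2 ∧ c4 = 2 ∧ c5 = 2 ∧ c6 = 2 ∧ c7 = 2 ∧ c8 = 2 ∧ c9 = 2 ∧ c10 = 2 ∧ c11 = 2 ∧ c12 = 2 ∧ c13 = 2 := by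
  have ht : target = 2 * (16^3+16^4+16^5+16^6+16^7+16^8+16^9+16^10+16^11+16^12+16^13) := rfl
  rw [ht] at h
  norm_num at h
  obtain rfl : c3 = 2 := by omega
  obtain rfl : c4 = 2 := by omega
  obtain rfl : c5 = 2 := by omega
  obtain rfl : c6 = 2 := by omega
  obtain rfl : c7 = 2 := by omega
  obtain rfl : c8 = 2 := by omega
  obtain rfl : c9 = 2 := by omega
  obtain rfl : c10 = 2 := by omega
  obtain rfl : c11 = 2 := by omega
  obtain rfl : c12 = 2 := by omega
  obtain rfl : c13 = 2 := by omega
  exact ⟨rfl, rfl, rfl, rfl, rfl, rfl, rfl, rfl, rfl, rfl, rfl⟩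

theorem good_of_eval {G : SimpleGraph (Fin 13)} (h : (cyclePoly G).eval 16 = target)
    (h2 : ∀ k, (cyclePoly G).coeff k ≤ 2) : Good G := by
  rw [eval_cyclePoly] at h
  have hc : ∀ k, 3 ≤ k → k ≤ 13 → cycleCount G k ≤ 2 := by
    intro k h3 h13
    have := h2 k
    rwa [cyclePoly_coeff, if_pos ⟨h3, h13⟩] at this
  obtain ⟨h3, h4, h5, h6, h7, h8, h9, h10, h11, h12, h13⟩ :=
    digits_two (hc 3 (by omega) (by omega)) (hc 4 (by omega) (by omega))
      (hc 5 (by omega) (by omega)) (hc 6 (by omega) (by omega)) (hc 7 (by omega) (by omega))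
      (hc 8 (by omega) (by omega)) (hc 9 (by omega) (by omega)) (hc 10 (by omega) (by omega))
      (hc 11 (by omega) (by omega)) (hc 12 (by omega) (by omega)) (hc 13 (by omega) (by omega)) h
  intro k hk3 hk13
  interval_cases k <;> assumption

theorem newval_ne_zero {A val : ℕ} {G0 G : SimpleGraph (Fin 13)} (hS : St A val G0) {a b : Fin 13}
    (hab : a ≠ b) (h : ¬ G0.Adj a b) (hle : G0 ≤ G) (hadj : G.Adj a b) (hG : Good G) :
    newval A val a.val b.val ≠ 0 := by
  intro h0
  obtain ⟨k, hk⟩ := (newval_spec hS hab h).1 h0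
  have hle' : addEdge G0 a b ≤ G := by
    intro u v huv
    rcases (addEdge_adj G0 hab u v).1 huv with h | ⟨rfl, rfl⟩ | ⟨rfl, rfl⟩
    · exact hle h
    · exact hadj
    · exact hadj.symm
  have h2 := good_coeff hG k
  rw [cyclePoly_coeff] at hk h2
  have := cycleCount_mono hle' k
  split_ifs at hk h2 <;> omega

theorem filt_cons (A val a b x : ℕ) (l : List (ℕ × ℕ × ℕ)) :
    filt A val ((a, b, x) :: l) = Nat.rec (motive := fun _ => List (ℕ × ℕ × ℕ)) (filt A val l)
      (fun v _ => (a, b, v) :: filt A val l) (newval A val a b) := rfl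

theorem filt_sound (A val : ℕ) (l : List (ℕ × ℕ × ℕ)) {a b y : ℕ}
    (h : (a, b, y) ∈ filt A val l) : newval A val a b = y + 1 := by
  induction l with
  | nil => exact absurd h (List.not_mem_nil)
  | cons e l ih =>
    obtain ⟨a', b', x⟩ := e
    rw [filt_cons] at h
    generalize hr : newval A val a' b' = r at h
    cases r with
    | zero => exact ih h
    | succ r =>
      rcases List.mem_cons.1 h with h | h
      · simp only [Prod.mk.injEq] at h
        obtain ⟨rfl, rfl, rfl⟩ := h
        exact hr
      · exact ih h

theorem filt_complete (A val : ℕ) (l : List (ℕ × ℕ × ℕ)) {a b x y : ℕ}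
    (h : (a, b, x) ∈ l) (hy : newval A val a b = y + 1) : (a, b, y) ∈ filt A val l := by
  induction l with
  | nil => exact absurd h (List.not_mem_nil)
  | cons e l ih =>
    obtain ⟨a', b', x'⟩ := e
    rw [filt_cons]
    rcases List.mem_cons.1 h with h | h
    · simp only [Prod.mk.injEq] at h
      obtain ⟨rfl, rfl, rfl⟩ := h
      rw [hy]
      exact List.mem_cons_self
    · generalize newval A val a' b' = r
      cases r with
      | zero => exact ih h
      | succ r => exact List.mem_cons_of_mem _ (ih h)

theorem memN_spec {A : ℕ} {l : List ℕ} (h : memN A l = true) : A ∈ l := by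
  induction l with
  | nil => exact absurd h (by simp [memN])
  | cons a l ih =>
    rw [memN, Bool.or_eq_true] at h
    rcases h with h | h
    · rw [Nat.eq_of_beq_eq_true h]; exact List.mem_cons_self
    · exact List.mem_cons_of_mem _ (ih h)

theorem leaf_spec {sols : List ℕ} {A val : ℕ} {G : SimpleGraph (Fin 13)} (hS : St A val G)
    (hG : Good G) (h : leaf sols A val = true) : ∃ s ∈ sols, Enc s G := by
  have e : Nat.beq val target = true := by
    rw [hS.2.1, good_eval hG]; exact Nat.beq_refl _
  unfold leaf at h
  rw [e, cond_true] at h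
  exact ⟨A, memN_spec h, hS.1⟩

theorem loop_cons {g : ℕ → ℕ → List (ℕ × ℕ × ℕ) → Bool} {A : ℕ} {e : ℕ × ℕ × ℕ}
    {l : List (ℕ × ℕ × ℕ)} (h : loop g A (e :: l) = true) :
    loop g A l = true ∧ g (addE A e.1 e.2.1) e.2.2 l = true := by
  have h1 : loop g A (e :: l) = Bool.rec (motive := fun _ => Bool) false (loop g A l)
    (g (addE A e.1 e.2.1) e.2.2 l) := rfl
  rw [h1] at h
  generalize g (addE A e.1 e.2.1) e.2.2 l = r at h
  cases r
  · exact absurd h (by simp)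
  · exact ⟨h, rfl⟩

theorem go_succ {sols : List ℕ} {d A val : ℕ} {cs : List (ℕ × ℕ × ℕ)}
    (h : go sols (d + 1) A val cs = true) :
    leaf sols A val = true ∧ loop (go sols d) A (filt A val cs) = true := by
  have h1 : go sols (d + 1) A val cs = Bool.rec (motive := fun _ => Bool) false
    (loop (go sols d) A (filt A val cs)) (leaf sols A val) := rfl
  rw [h1] at h
  generalize leaf sols A val = r at h
  cases r
  · exact absurd h (by simp)
  · exact ⟨rfl, h⟩

theorem exists_new {G0 G : SimpleGraph (Fin 13)} (hle : G0 ≤ G) (hne : G ≠ G0) :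
    ∃ u v : Fin 13, u < v ∧ G.Adj u v ∧ ¬ G0.Adj u v := by
  by_contra hcon
  push Not at hcon
  apply hne
  refine le_antisymm ?_ hle
  intro u v huv
  rcases lt_trichotomy u v with h | h | h
  · exact hcon u v h huv
  · exact absurd h huv.ne
  · exact (hcon v u h huv.symm).symm

theorem ncard_addEdge {G0 : SimpleGraph (Fin 13)} {a b : Fin 13} (hab : a ≠ b)
    (h : ¬ G0.Adj a b) : G0.edgeSet.ncard < (addEdge G0 a b).edgeSet.ncard := by
  refine Set.ncard_lt_ncard ?_ (Set.toFinite _)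
  rw [edgeSet_ssubset_edgeSet]
  refine lt_of_le_of_ne le_sup_left ?_
  intro he
  apply h
  have : (addEdge G0 a b).Adj a b := (addEdge_adj G0 hab a b).2 (Or.inr (Or.inl ⟨rfl, rfl⟩))
  rw [← he] at this
  exact this

theorem go_spec (sols : List ℕ) (d : ℕ) : ∀ (A val : ℕ) (cs : List (ℕ × ℕ × ℕ))
    (G0 G : SimpleGraph (Fin 13)), St A val G0 → G0 ≤ G → Good G →
    G.edgeSet.ncard ≤ G0.edgeSet.ncard + d →
    (∀ u v : Fin 13, u < v → G.Adj u v → ¬ G0.Adj u v → ∃ x, (u.val, v.val, x) ∈ cs) →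
    go sols d A val cs = true → ∃ s ∈ sols, Enc s G := by
  induction d with
  | zero =>
    intro A val cs G0 G hS hle hG hcard hcov hgo
    by_cases hne : G = G0
    · subst hne
      exact leaf_spec hS hG hgo
    · exfalso
      have : G0.edgeSet.ncard < G.edgeSet.ncard := by
        refine Set.ncard_lt_ncard ?_ (Set.toFinite _)
        rw [edgeSet_ssubset_edgeSet]
        exact lt_of_le_of_ne hle (Ne.symm hne)
      omega
  | succ d ih =>
    intro A val cs G0 G hS hle hG hcard hcov hgo
    obtain ⟨hleaf, hloop⟩ := go_succ hgo
    by_cases hne : G = G0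
    · subst hne
      exact leaf_spec hS hG hleaf
    have key : ∀ l : List (ℕ × ℕ × ℕ), (∀ a b y, (a, b, y) ∈ l → newval A val a b = y + 1) →
        (∀ u v : Fin 13, u < v → G.Adj u v → ¬ G0.Adj u v → ∃ x, (u.val, v.val, x) ∈ l) →
        loop (go sols d) A l = true → ∃ s ∈ sols, Enc s G := by
      intro l
      induction l with
      | nil =>
        intro _ hc _
        obtain ⟨u, v, h1, h2, h3⟩ := exists_new hle hne
        obtain ⟨x, hx⟩ := hc u v h1 h2 h3
        exact absurd hx (List.not_mem_nil)
      | cons e l ihl =>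
        intro hv hc hl
        obtain ⟨a, b, y⟩ := e
        obtain ⟨hl1, hl2⟩ := loop_cons hl
        by_cases hex : ∃ u v : Fin 13, u < v ∧ G.Adj u v ∧ ¬ G0.Adj u v ∧ u.val = a ∧ v.val = b
        · obtain ⟨u, v, h1, h2, h3, rfl, rfl⟩ := hex
          have hab : u ≠ v := h1.ne
          refine ih _ _ l (addEdge G0 u v) G
            (st_step hS hab h3 (hv _ _ _ List.mem_cons_self)) ?_ hG ?_ ?_ hl2
          · intro x z hxz
            rcases (addEdge_adj G0 hab x z).1 hxz with h | ⟨rfl, rfl⟩ | ⟨rfl, rfl⟩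
            · exact hle h
            · exact h2
            · exact h2.symm
          · have := ncard_addEdge hab h3
            omega
          · intro u' v' h1' h2' h3'
            rw [addEdge_adj G0 hab] at h3'
            push Not at h3'
            obtain ⟨x, hx⟩ := hc u' v' h1' h2' h3'.1
            rcases List.mem_cons.1 hx with hx | hx
            · simp only [Prod.mk.injEq] at hx
              exact absurd (Fin.ext hx.2.1) (h3'.2.1 (Fin.ext hx.1))
            · exact ⟨x, hx⟩
        · refine ihl (fun a b y h => hv a b y (List.mem_cons_of_mem _ h)) ?_ hl1
          intro u v h1 h2 h3
          obtain ⟨x, hx⟩ := hc u v h1 h2 h3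
          rcases List.mem_cons.1 hx with hx | hx
          · simp only [Prod.mk.injEq] at hx
            exact absurd ⟨u, v, h1, h2, h3, hx.1, hx.2.1⟩ hex
          · exact ⟨x, hx⟩
    refine key _ (fun a b y h => filt_sound A val cs h) ?_ hloop
    intro u v h1 h2 h3
    obtain ⟨x, hx⟩ := hcov u v h1 h2 h3
    have hnz := newval_ne_zero hS h1.ne h3 hle h2 hG
    obtain ⟨y, hy⟩ := Nat.exists_eq_succ_of_ne_zero hnz
    exact ⟨y, filt_complete A val cs hx hy⟩

end PC

namespace PC

def rim : Nat := 187220646823101120088971649055323721735212172881922 * 2^64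
def chords (l : Nat) : List (Nat × Nat × Nat) :=
  ((List.range (13-l)).map fun a => (a, (a+l), 0)) ++
    ((List.range l).map fun a => (a, a+(13-l), 0))
def cand : Nat → List (Nat × Nat × Nat)
 | 6 => (chords 6).tail ++ chords 5 ++ chords 4 ++ chords 3 ++ chords 2
 | 5 => (chords 5).tail ++ chords 4 ++ chords 3 ++ chords 2
 | 4 => (chords 4).tail ++ chords 3 ++ chords 2
 | 3 => (chords 3).tail ++ chords 2
 | _ => (chords 2).tail
def mk (l : List (Nat × Nat)) : Nat := l.foldl (fun A e => addE A e.1 e.2) rim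
def sols : List Nat := [mk [(0,5),(1,11),(2,4),(3,5)], mk [(0,5),(1,11),(1,3),(2,4)],
  mk [(0,5),(4,7),(1,3),(2,4)], mk [(0,5),(4,7),(0,2),(1,3)]]

noncomputable def val1 (l : Nat) : Nat := Nat.pred (newval rim (16^13) 0 l)

noncomputable def start (l : Nat) : Bool :=
  force (addE rim 0 l) fun A1 => force (val1 l) fun v => go sols 4 A1 v (cand l)

/-- `loop`, restricted to the first `n` entries -/
noncomputable def loopC (g : Nat → Nat → List (Nat × Nat × Nat) → Bool) (A : Nat) (n : Nat) :
    List (Nat × Nat × Nat) → Bool :=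
  Nat.rec (fun _ => true) (fun _ ih l => List.rec true (fun e tl _ => Bool.rec false (ih tl)
    (force (addE A e.1 e.2.1) fun A' => g A' e.2.2 tl)) l) n

noncomputable def part (l m n : Nat) : Bool :=
  force (addE rim 0 l) fun A1 => force (val1 l) fun v =>
    loopC (go sols 3) A1 n ((filt A1 v (cand l)).drop m)

noncomputable def leaf1 (l : Nat) : Bool :=
  force (addE rim 0 l) fun A1 => force (val1 l) fun v => leaf sols A1 v

/-- Add the edges of a list to a state, checking that the final value is `t`. -/
noncomputable def chk (t : Nat) (es : List (Fin 13 × Fin 13)) : Nat → Nat → Bool :=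
  List.rec (fun _ v => Nat.beq v t) (fun e _ ih A v =>
    Bool.rec (Bool.rec (Nat.rec false (fun y _ => force (addE A e.1.val e.2.val) fun A' => ih A' y)
      (newval A v e.1.val e.2.val)) false (Nat.testBit A (64 + (13 * e.1.val + e.2.val))))
      false (Nat.beq e.1.val e.2.val)) es

def rimE : List (Fin 13 × Fin 13) := (List.finRange 13).map fun a => (a, a + 1)

def dec (A : Nat) : SimpleGraph (Fin 13) where
  Adj u v := u ≠ v ∧ A.testBit (64 + (13 * u.val + v.val)) = true ∧
    A.testBit (64 + (13 * v.val + u.val)) = true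
  symm := ⟨fun _ _ h => ⟨h.1.symm, h.2.2, h.2.1⟩⟩
  loopless := ⟨fun _ h => h.1 rfl⟩

instance (A : Nat) : DecidableRel (dec A).Adj := fun _ _ => inferInstanceAs (Decidable (_ ∧ _ ∧ _))
end PC

namespace PC
set_option maxRecDepth 100000
theorem start_2 : start 2 = true := by decide +kernel
theorem start_3 : start 3 = true := by decide +kernel
theorem start_4 : start 4 = true := by decide +kernel
theorem part_5_0 : part 5 0 3 = true := by decide +kernel
theorem part_5_3 : part 5 3 3 = true := by decide +kernel
theorem part_5_6 : part 5 6 6 = true := by decide +kernel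
theorem part_5_12 : part 5 12 10 = true := by decide +kernel
theorem part_5_22 : part 5 22 42 = true := by decide +kernel
theorem leaf_5 : leaf1 5 = true := by decide +kernel
theorem part_6_0 : part 6 0 5 = true := by decide +kernel
theorem part_6_5 : part 6 5 5 = true := by decide +kernel
theorem part_6_10 : part 6 10 5 = true := by decide +kernel
theorem part_6_15 : part 6 15 5 = true := by decide +kernel
theorem part_6_20 : part 6 20 5 = true := by decide +kernel
theorem part_6_25 : part 6 25 5 = true := by decide +kernel
theorem part_6_30 : part 6 30 5 = true := by decide +kernel
theorem part_6_35 : part 6 35 5 = true := by decide +kernel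
theorem part_6_40 : part 6 40 5 = true := by decide +kernel
theorem part_6_45 : part 6 45 5 = true := by decide +kernel
theorem part_6_50 : part 6 50 5 = true := by decide +kernel
theorem part_6_55 : part 6 55 5 = true := by decide +kernel
theorem part_6_60 : part 6 60 4 = true := by decide +kernel
theorem leaf_6 : leaf1 6 = true := by decide +kernel
end PC

namespace PC

theorem force_eq {α : Type} (x : ℕ) (f : ℕ → α) : force x f = f x := rfl

theorem go_start {l : ℕ} (h : start l = true) :
    go sols 4 (addE rim 0 l) (val1 l) (cand l) = true := by
  unfold start at h
  rwa [force_eq, force_eq] at h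

theorem go_of {l : ℕ} (h : leaf1 l = true)
    (h2 : loop (go sols 3) (addE rim 0 l) ((filt (addE rim 0 l) (val1 l) (cand l)).drop 0) = true) :
    go sols 4 (addE rim 0 l) (val1 l) (cand l) = true := by
  unfold leaf1 at h
  rw [force_eq, force_eq] at h
  rw [List.drop_zero] at h2
  generalize val1 l = v at h h2
  generalize addE rim 0 l = A at h h2
  have h1 : go sols (3 + 1) A v (cand l) = Bool.rec (motive := fun _ => Bool) false
    (loop (go sols 3) A (filt A v (cand l))) (leaf sols A v) := rfl
  rw [h, h2] at h1
  exact h1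

theorem loopC_spec (g : ℕ → ℕ → List (ℕ × ℕ × ℕ) → Bool) (A n : ℕ) :
    ∀ l : List (ℕ × ℕ × ℕ), loopC g A n l = true → loop g A (l.drop n) = true →
      loop g A l = true := by
  induction n with
  | zero => intro l _ h; rwa [List.drop_zero] at h
  | succ n ih =>
    intro l h1 h2
    cases l with
    | nil => rfl
    | cons e l =>
      have e1 : loopC g A (n + 1) (e :: l) = Bool.rec (motive := fun _ => Bool) false
        (loopC g A n l) (g (addE A e.1 e.2.1) e.2.2 l) := rfl
      have e2 : loop g A (e :: l) = Bool.rec (motive := fun _ => Bool) false (loop g A l)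
        (g (addE A e.1 e.2.1) e.2.2 l) := rfl
      rw [e1] at h1
      rw [e2]
      generalize g (addE A e.1 e.2.1) e.2.2 l = r at h1
      cases r
      · exact absurd h1 (by simp)
      · exact ih l h1 h2

theorem loop_part {l m n : ℕ} (h : part l m n = true)
    (h2 : loop (go sols 3) (addE rim 0 l)
      ((filt (addE rim 0 l) (val1 l) (cand l)).drop (m + n)) = true) :
    loop (go sols 3) (addE rim 0 l) ((filt (addE rim 0 l) (val1 l) (cand l)).drop m) = true := by
  unfold part at h
  rw [force_eq, force_eq] at h
  generalize val1 l = v at h h2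
  generalize addE rim 0 l = A at h h2
  refine loopC_spec _ _ n _ h ?_
  rwa [List.drop_drop]

theorem filt_length (A val : ℕ) (l : List (ℕ × ℕ × ℕ)) :
    (filt A val l).length ≤ l.length := by
  induction l with
  | nil => exact le_rfl
  | cons e l ih =>
    obtain ⟨a, b, x⟩ := e
    rw [filt_cons]
    generalize newval A val a b = r
    cases r with
    | zero => exact ih.trans (by simp)
    | succ r => simpa using ih

theorem loop_end {l m : ℕ} (h : (cand l).length ≤ m) :
    loop (go sols 3) (addE rim 0 l) ((filt (addE rim 0 l) (val1 l) (cand l)).drop m) = true := by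
  generalize val1 l = v
  generalize addE rim 0 l = A
  rw [List.drop_of_length_le ((filt_length _ _ _).trans h)]
  rfl

theorem enc_dec {A : ℕ} {G : SimpleGraph (Fin 13)} (h : Enc A G) : G = dec A := by
  ext u v
  change _ ↔ (u ≠ v ∧ _ ∧ _)
  rw [h, h]
  exact ⟨fun h => ⟨h.ne, h, h.symm⟩, fun h => h.2.1⟩

theorem chk_spec (t : ℕ) (es : List (Fin 13 × Fin 13)) : ∀ (A v : ℕ) (G : SimpleGraph (Fin 13)),
    St A v G → chk t es A v = true →
      ∃ A', St A' t (es.foldl (fun G e => addEdge G e.1 e.2) G) := by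
  induction es with
  | nil =>
    intro A v G hS h
    have h : Nat.beq v t = true := h
    rw [Nat.eq_of_beq_eq_true h] at hS
    exact ⟨A, hS⟩
  | cons e es ih =>
    intro A v G hS h
    have e1 : chk t (e :: es) A v = Bool.rec (motive := fun _ => Bool)
      (Bool.rec (motive := fun _ => Bool)
      (Nat.rec (motive := fun _ => Bool) false (fun y _ => chk t es (addE A e.1.val e.2.val) y)
      (newval A v e.1.val e.2.val)) false (Nat.testBit A (64 + (13 * e.1.val + e.2.val))))
      false (Nat.beq e.1.val e.2.val) := rfl
    rw [e1] at h
    have hab : e.1 ≠ e.2 := by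
      intro h'
      have : Nat.beq e.1.val e.2.val = true := by rw [h']; exact Nat.beq_refl _
      rw [this] at h
      exact absurd h (by simp)
    rw [beq_fin_false hab] at h
    have hadj : ¬ G.Adj e.1 e.2 := by
      intro h'
      rw [(hS.1 _ _).2 h'] at h
      exact absurd h (by simp)
    have : Nat.testBit A (64 + (13 * e.1.val + e.2.val)) = false := by
      rw [← Bool.not_eq_true]
      exact fun h' => hadj ((hS.1 _ _).1 h')
    rw [this] at h
    generalize hr : newval A v e.1.val e.2.val = r at h
    cases r with
    | zero => exact absurd h (by simp)
    | succ y => exact ih _ _ _ (st_step hS hab hadj hr) h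

theorem st_bot : St 0 0 (⊥ : SimpleGraph (Fin 13)) := by
  have h0 : cyclePoly (⊥ : SimpleGraph (Fin 13)) = 0 := by
    ext k
    rw [cyclePoly_coeff]
    split_ifs with h
    · obtain ⟨m, rfl⟩ : ∃ m, k = m + 3 := ⟨k - 3, by omega⟩
      simp [cycleCount_bot]
    · simp
  refine ⟨fun u v => ?_, ?_, ?_⟩
  · simp
  · rw [h0]; simp
  · rw [h0]; simp

theorem fold_adj (es : List (Fin 13 × Fin 13)) (h : ∀ e ∈ es, e.1 ≠ e.2) :
    ∀ (G : SimpleGraph (Fin 13)) (u v : Fin 13),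
    (es.foldl (fun G e => addEdge G e.1 e.2) G).Adj u v ↔
      G.Adj u v ∨ (u, v) ∈ es ∨ (v, u) ∈ es := by
  induction es with
  | nil => intro G u v; simp
  | cons e es ih =>
    intro G u v
    obtain ⟨a, b⟩ := e
    have hab : a ≠ b := h (a, b) List.mem_cons_self
    rw [List.foldl_cons, ih (fun e he => h e (List.mem_cons_of_mem _ he)),
      addEdge_adj G hab]
    simp only [List.mem_cons, Prod.mk.injEq]
    tauto

theorem st_rim : St rim (16 ^ 13) (cycleGraph 13) := by
  have hc : chk (16 ^ 13) rimE 0 0 = true := by decide +kernel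
  obtain ⟨A', hA'⟩ := chk_spec _ _ _ _ _ st_bot hc
  have hg : rimE.foldl (fun G e => addEdge G e.1 e.2) (⊥ : SimpleGraph (Fin 13)) =
      cycleGraph 13 := by
    have h1 : ∀ e ∈ rimE, e.1 ≠ e.2 := by decide +kernel
    have h2 : ∀ u v : Fin 13, ((u, v) ∈ rimE ∨ (v, u) ∈ rimE) ↔ (v = u + 1 ∨ u = v + 1) := by
      decide +kernel
    ext u v
    rw [fold_adj _ h1, bot_adj, false_or, h2]
    exact (cyc_adj (m := 10)).symm
  rw [hg] at hA'
  refine ⟨?_, hA'.2⟩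
  have h2 : ∀ u v : Fin 13, rim.testBit (64 + (13 * u.val + v.val)) = true ↔
      (v = u + 1 ∨ u = v + 1) := by decide +kernel
  intro u v
  rw [h2]
  exact (cyc_adj (m := 10)).symm

/-- The list of edges of the `i`-th solution. -/
def solE (l : List (Fin 13 × Fin 13)) : List (Fin 13 × Fin 13) := rimE ++ l

theorem good_dec (s : ℕ) (l : List (Fin 13 × Fin 13)) (hc : chk target (solE l) 0 0 = true)
    (h1 : ∀ e ∈ solE l, e.1 ≠ e.2)
    (h2 : ∀ u v : Fin 13, ((u, v) ∈ solE l ∨ (v, u) ∈ solE l) ↔ (dec s).Adj u v) :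
    Good (dec s) := by
  obtain ⟨A', hA'⟩ := chk_spec _ _ _ _ _ st_bot hc
  have hg : (solE l).foldl (fun G e => addEdge G e.1 e.2) (⊥ : SimpleGraph (Fin 13)) =
      dec s := by
    ext u v
    rw [fold_adj _ h1, bot_adj, false_or, h2]
  rw [hg] at hA'
  exact good_of_eval hA'.2.1.symm hA'.2.2

def s0 : ℕ := mk [(0,5),(1,11),(2,4),(3,5)]
def s1 : ℕ := mk [(0,5),(1,11),(1,3),(2,4)]
def s2 : ℕ := mk [(0,5),(4,7),(1,3),(2,4)]
def s3 : ℕ := mk [(0,5),(4,7),(0,2),(1,3)]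

theorem good_s0 : Good (dec s0) :=
  good_dec s0 [(0,5),(1,11),(2,4),(3,5)] (by decide +kernel) (by decide +kernel) (by decide +kernel)

theorem good_s1 : Good (dec s1) :=
  good_dec s1 [(0,5),(1,11),(1,3),(2,4)] (by decide +kernel) (by decide +kernel) (by decide +kernel)

theorem card_s0 : (dec s0).edgeSet.ncard ≤ 18 := by
  rw [Set.ncard_eq_toFinset_card']
  change (dec s0).edgeFinset.card ≤ 18
  decide +kernel

theorem card_s1 : (dec s1).edgeSet.ncard ≤ 18 := by
  rw [Set.ncard_eq_toFinset_card']
  change (dec s1).edgeFinset.card ≤ 18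
  decide +kernel

theorem card_rim : (cycleGraph 13).edgeSet.ncard = 13 := by
  rw [Set.ncard_eq_toFinset_card']
  change (cycleGraph 13).edgeFinset.card = 13
  decide +kernel

def iso30 : dec s3 ≃g dec s0 where
  toEquiv := Equiv.subLeft 5
  map_rel_iff' := by
    intro u v
    have : ∀ u v : Fin 13, (dec s0).Adj (5 - u) (5 - v) ↔ (dec s3).Adj u v := by decide +kernel
    exact this u v

def iso21 : dec s2 ≃g dec s1 where
  toEquiv := Equiv.subLeft 5
  map_rel_iff' := by
    intro u v
    have : ∀ u v : Fin 13, (dec s1).Adj (5 - u) (5 - v) ↔ (dec s2).Adj u v := by decide +kernel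
    exact this u v

theorem not_iso : IsEmpty (dec s0 ≃g dec s1) := by
  refine ⟨fun e => ?_⟩
  have h0 : (dec s0).Adj 5 6 ∧ (dec s0).degree 5 = 4 ∧ (dec s0).degree 6 = 2 := by decide +kernel
  have h1 : ∀ u v : Fin 13, ¬ ((dec s1).Adj u v ∧ (dec s1).degree u = 4 ∧ (dec s1).degree v = 2) := by
    decide +kernel
  apply h1 (e 5) (e 6)
  rw [e.degree_eq, e.degree_eq]
  exact ⟨e.map_rel_iff.2 h0.1, h0.2⟩

end PC

namespace PC
theorem go_5 : go sols 4 (addE rim 0 5) (val1 5) (cand 5) = true := by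
  apply go_of leaf_5
  refine loop_part (n := 3) part_5_0 ?_
  refine loop_part (n := 3) part_5_3 ?_
  refine loop_part (n := 6) part_5_6 ?_
  refine loop_part (n := 10) part_5_12 ?_
  refine loop_part (n := 42) part_5_22 ?_
  exact loop_end (by decide)

theorem go_6 : go sols 4 (addE rim 0 6) (val1 6) (cand 6) = true := by
  apply go_of leaf_6
  refine loop_part (n := 5) part_6_0 ?_
  refine loop_part (n := 5) part_6_5 ?_
  refine loop_part (n := 5) part_6_10 ?_
  refine loop_part (n := 5) part_6_15 ?_
  refine loop_part (n := 5) part_6_20 ?_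
  refine loop_part (n := 5) part_6_25 ?_
  refine loop_part (n := 5) part_6_30 ?_
  refine loop_part (n := 5) part_6_35 ?_
  refine loop_part (n := 5) part_6_40 ?_
  refine loop_part (n := 5) part_6_45 ?_
  refine loop_part (n := 5) part_6_50 ?_
  refine loop_part (n := 5) part_6_55 ?_
  refine loop_part (n := 4) part_6_60 ?_
  exact loop_end (by decide)

theorem go_2 : go sols 4 (addE rim 0 2) (val1 2) (cand 2) = true := go_start start_2

theorem go_3 : go sols 4 (addE rim 0 3) (val1 3) (cand 3) = true := go_start start_3

theorem go_4 : go sols 4 (addE rim 0 4) (val1 4) (cand 4) = true := go_start start_4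

end PC

namespace PC

theorem rim_le_comap {G : SimpleGraph (Fin 13)} (h : cycleGraph 13 ≤ G) (a : Fin 13) :
    cycleGraph 13 ≤ G.comap (Equiv.addRight a) := by
  intro u v huv
  change G.Adj (u + a) (v + a)
  apply h
  rcases (cyc_adj (m := 10)).1 huv with rfl | rfl
  · exact (cyc_adj (m := 10)).2 (Or.inl (by abel))
  · exact (cyc_adj (m := 10)).2 (Or.inr (by abel))

theorem ncard_iso {V W : Type*} {G : SimpleGraph V} {G' : SimpleGraph W} (e : G ≃g G') :
    G.edgeSet.ncard = G'.edgeSet.ncard := by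
  rw [← Nat.card_coe_set_eq, ← Nat.card_coe_set_eq]
  exact Nat.card_congr e.mapEdgeSet

/-- The search with first chord of length `n`. -/
theorem core (n : ℕ) (l : Fin 13) (hl : l.val = n) (h0 : (0 : Fin 13) ≠ l)
    (hrim : ¬ (cycleGraph 13).Adj 0 l)
    (hgo : go sols 4 (addE rim 0 n) (val1 n) (cand n) = true)
    (long : List (Fin 13))
    (hcov : ∀ u v : Fin 13, u < v → (v = u + 1 ∨ u = v + 1) ∨ (u = 0 ∧ v = l) ∨
      (∃ j ∈ long, v = u + j ∨ u = v + j) ∨ (u.val, v.val, 0) ∈ cand n)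
    (G : SimpleGraph (Fin 13)) (hG : Good G) (hle : cycleGraph 13 ≤ G)
    (hcard : G.edgeSet.ncard ≤ 18) (hex : ∃ a, G.Adj a (a + l))
    (hno : ∀ j ∈ long, ∀ a, ¬ G.Adj a (a + j)) :
    ∃ s ∈ sols, Nonempty (G ≃g dec s) := by
  obtain ⟨a, ha⟩ := hex
  let G' : SimpleGraph (Fin 13) := G.comap (Equiv.addRight a)
  let e : G' ≃g G := ⟨Equiv.addRight a, Iff.rfl⟩
  have hG' : Good G' := fun k h3 h13 => (cycleCount_iso e k).trans (hG k h3 h13)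
  have hle' : cycleGraph 13 ≤ G' := rim_le_comap hle a
  have hcard' : G'.edgeSet.ncard ≤ 18 := by rw [ncard_iso e]; exact hcard
  have hadj : G'.Adj 0 l := by
    change G.Adj (0 + a) (l + a)
    rwa [zero_add, add_comm]
  have hno' : ∀ j ∈ long, ∀ a, ¬ G'.Adj a (a + j) := by
    intro j hj x h
    apply hno j hj (x + a)
    have h : G.Adj (x + a) (x + j + a) := h
    rwa [add_right_comm] at h
  have hnz := newval_ne_zero st_rim h0 hrim hle' hadj hG'
  obtain ⟨y, hy⟩ := Nat.exists_eq_succ_of_ne_zero hnz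
  have hS := st_step st_rim h0 hrim hy
  rw [Fin.val_zero, hl] at hS hy
  have hv : val1 n = y := by
    unfold val1; rw [hy]; rfl
  rw [← hv] at hS
  have hlt := ncard_addEdge h0 hrim
  rw [card_rim] at hlt
  have c1 : addEdge (cycleGraph 13) 0 l ≤ G' := by
    intro u v huv
    rcases (addEdge_adj _ h0 u v).1 huv with h | ⟨rfl, rfl⟩ | ⟨rfl, rfl⟩
    · exact hle' h
    · exact hadj
    · exact hadj.symm
  have c2 : ∀ u v : Fin 13, u < v → G'.Adj u v → ¬ (addEdge (cycleGraph 13) 0 l).Adj u v →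
      ∃ x, (u.val, v.val, x) ∈ cand n := by
    intro u v huv h1 h2
    rw [addEdge_adj _ h0] at h2
    push Not at h2
    rcases hcov u v huv with h | h | ⟨j, hj, rfl | rfl⟩ | h
    · exact absurd ((cyc_adj (m := 10)).2 h) h2.1
    · exact absurd h.2 (h2.2.1 h.1)
    · exact absurd h1 (hno' j hj _)
    · exact absurd h1.symm (hno' j hj _)
    · exact ⟨0, h⟩
  obtain ⟨s, hs, hE⟩ := go_spec sols 4 _ _ _ _ G' hS c1 hG' (by omega) c2 hgo
  refine ⟨s, hs, ⟨?_⟩⟩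
  rw [← enc_dec hE]
  exact e.symm

theorem rim_not_good : ¬ Good (cycleGraph 13) := by
  intro h
  have h1 := good_eval h
  rw [← st_rim.2.1] at h1
  exact absurd h1 (by decide +kernel)

theorem main_sols (G : SimpleGraph (Fin 13)) (hG : Good G) (hle : cycleGraph 13 ≤ G)
    (hcard : G.edgeSet.ncard ≤ 18) : ∃ s ∈ sols, Nonempty (G ≃g dec s) := by
  by_cases h6 : ∃ a, G.Adj a (a + 6)
  · exact core 6 6 rfl (by decide) (by decide) go_6 [] (by decide +kernel) G hG hle hcard h6
      (by simp)
  push Not at h6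
  by_cases h5 : ∃ a, G.Adj a (a + 5)
  · exact core 5 5 rfl (by decide) (by decide) go_5 [6] (by decide +kernel) G hG hle hcard h5
      (by simpa using h6)
  push Not at h5
  by_cases h4 : ∃ a, G.Adj a (a + 4)
  · exact core 4 4 rfl (by decide) (by decide) go_4 [5, 6] (by decide +kernel) G hG hle hcard h4
      (by simpa using ⟨h5, h6⟩)
  push Not at h4
  by_cases h3 : ∃ a, G.Adj a (a + 3)
  · exact core 3 3 rfl (by decide) (by decide) go_3 [4, 5, 6] (by decide +kernel) G hG hle hcard h3
      (by simpa using ⟨h4, h5, h6⟩)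
  push Not at h3
  by_cases h2 : ∃ a, G.Adj a (a + 2)
  · exact core 2 2 rfl (by decide) (by decide) go_2 [3, 4, 5, 6] (by decide +kernel) G hG hle hcard
      h2 (by simpa using ⟨h3, h4, h5, h6⟩)
  push Not at h2
  exfalso
  have hcov : ∀ u v : Fin 13, u ≠ v → (v = u + 1 ∨ u = v + 1) ∨ (v = u + 2 ∨ u = v + 2) ∨
      (v = u + 3 ∨ u = v + 3) ∨ (v = u + 4 ∨ u = v + 4) ∨ (v = u + 5 ∨ u = v + 5) ∨
      (v = u + 6 ∨ u = v + 6) := by decide +kernel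
  have : G = cycleGraph 13 := by
    refine le_antisymm ?_ hle
    intro u v huv
    rcases hcov u v huv.ne with h | h | h | h | h | h
    · exact (cyc_adj (m := 10)).2 h
    · rcases h with rfl | rfl
      · exact absurd huv (h2 _)
      · exact absurd huv.symm (h2 _)
    · rcases h with rfl | rfl
      · exact absurd huv (h3 _)
      · exact absurd huv.symm (h3 _)
    · rcases h with rfl | rfl
      · exact absurd huv (h4 _)
      · exact absurd huv.symm (h4 _)
    · rcases h with rfl | rfl
      · exact absurd huv (h5 _)
      · exact absurd huv.symm (h5 _)
    · rcases h with rfl | rfl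
      · exact absurd huv (h6 _)
      · exact absurd huv.symm (h6 _)
  exact rim_not_good (this ▸ hG)

theorem main_fin (G : SimpleGraph (Fin 13)) (hG : Good G) (hle : cycleGraph 13 ≤ G)
    (hcard : G.edgeSet.ncard ≤ 18) : Nonempty (G ≃g dec s0) ∨ Nonempty (G ≃g dec s1) := by
  obtain ⟨s, hs, ⟨e⟩⟩ := main_sols G hG hle hcard
  have hs : s ∈ [s0, s1, s2, s3] := hs
  simp only [List.mem_cons, List.not_mem_nil, or_false] at hs
  rcases hs with rfl | rfl | rfl | rfl
  · exact Or.inl ⟨e⟩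
  · exact Or.inr ⟨e⟩
  · exact Or.inr ⟨e.trans iso21⟩
  · exact Or.inl ⟨e.trans iso30⟩

theorem main_any (W : Type) [Fintype W] (G : SimpleGraph W) (hW : Fintype.card W = 13)
    (hcard : G.edgeSet.ncard ≤ 18) (hG : IsRPancyclic G 2) :
    Nonempty (G ≃g dec s0) ∨ Nonempty (G ≃g dec s1) := by
  have h13 := hG.2 13 (by omega) (by omega)
  have hne : {H : G.Subgraph | Nonempty (H.coe ≃g cycleGraph 13)}.Nonempty := by
    rw [Set.nonempty_iff_ne_empty]
    intro h
    unfold cycleCount at h13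
    rw [h, Set.ncard_empty] at h13
    omega
  obtain ⟨H, ⟨e⟩⟩ := hne
  let f : Fin 13 → W := fun i => (e.symm i : W)
  have hf : Function.Injective f := Subtype.val_injective.comp e.symm.injective
  have hb : Function.Bijective f := by
    rw [Fintype.bijective_iff_injective_and_card]
    exact ⟨hf, by simp [hW]⟩
  let E : Fin 13 ≃ W := Equiv.ofBijective f hb
  let G' : SimpleGraph (Fin 13) := G.comap E
  let i : G' ≃g G := ⟨E, Iff.rfl⟩
  have hle : cycleGraph 13 ≤ G' := by
    intro u v huv
    change G.Adj (f u) (f v)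
    have := e.symm.map_rel_iff.2 huv
    exact Subgraph.Adj.adj_sub this
  have hgood : Good G' := fun k h3 h13 =>
    (cycleCount_iso i k).trans (hG.2 k h3 (by omega))
  rcases main_fin G' hgood hle (by rw [ncard_iso i]; exact hcard) with hj | hj
  · exact Or.inl (hj.map fun j => i.symm.trans j)
  · exact Or.inr (hj.map fun j => i.symm.trans j)

end PC

theorem two_pancyclic_count_order_13 : ExactlyNUpToIso 2 2 13 18 := by
  refine ⟨![PC.dec PC.s0, PC.dec PC.s1], ?_, ?_, ?_⟩
  · intro i j hij
    have h := PC.not_iso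
    fin_cases i <;> fin_cases j
    · exact absurd rfl hij
    · exact h
    · exact ⟨fun e => h.elim e.symm⟩
    · exact absurd rfl hij
  · intro i
    fin_cases i
    · exact ⟨⟨by simp, fun k h3 h13 => PC.good_s0 k h3 (by simpa using h13)⟩, PC.card_s0⟩
    · exact ⟨⟨by simp, fun k h3 h13 => PC.good_s1 k h3 (by simpa using h13)⟩, PC.card_s1⟩
  · intro W _ G hW hcard hG
    rcases PC.main_any W G hW hcard hG with h | h
    · exact ⟨0, h⟩
    · exact ⟨1, h⟩
end
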